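/- arXiv:2309.15598 — 2 statements merged into one kernel-verified Lean document; each statement's English description precedes it below -/
import Mathlib

section
/- Let n ≥ 2 and let K ⊂ ℝ^{n+1} be a smooth, strictly convex body with the origin in its interior, whose support function h, radial function r, and Gauss curvature 𝒦 satisfy h^{p-1} |Dh|^{n+1-q} 𝒦 = 1 on S^n with n ≤ q ≤ n+1. Set α = q − n − 1 and dV = h σ_n dμ with σ_n = 1/𝒦. Then (n+1+p) ∫ r^{2α} |∇̄h|² dV ≤ n |∫ r^{α} X dV|² / ∫ dV, where X = Dh and |·| is the Euclidean norm on ℝ^{n+1}. -/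
open MeasureTheory Matrix Metric
open scoped RealInnerProductSpace

noncomputable section

/-- Euclidean space `ℝ^{n+1}`. -/
abbrev Euc (n : ℕ) : Type := EuclideanSpace ℝ (Fin (n + 1))

/-- The Euclidean Hessian matrix of `H : ℝ^{n+1} → ℝ` at `x`. -/
def ehess (n : ℕ) (H : Euc n → ℝ) (x : Euc n) : Matrix (Fin (n + 1)) (Fin (n + 1)) ℝ :=
  Matrix.of fun i j =>
    fderiv ℝ (fun y => fderiv ℝ H y (EuclideanSpace.single j 1)) x (EuclideanSpace.single i 1)

/-- For the 1-homogeneous extension `H` of the support function `h` and `x ∈ S^n`, the matrix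
`D²H(x) + h(x)·x xᵀ`.  Its restriction to the tangent space `x^⊥ = T_x S^n` is
`A[h] = ∇̄²h + h ḡ`, and `x` is an eigenvector with eigenvalue `h(x)`. -/
def bmat (n : ℕ) (H : Euc n → ℝ) (x : Euc n) : Matrix (Fin (n + 1)) (Fin (n + 1)) ℝ :=
  ehess n H x + Matrix.of fun i j => H x * (x i * x j)

/-- `σ_n = det A[h] = det(∇̄²h + h ḡ)/det ḡ`, computed as `det(bmat)/h`. -/
def sigman (n : ℕ) (H : Euc n → ℝ) (x : Euc n) : ℝ :=
  Matrix.det (bmat n H x) / H x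

/-- The Gauss curvature `𝒦 = 1/σ_n`. -/
def gaussCurv (n : ℕ) (H : Euc n → ℝ) (x : Euc n) : ℝ := (sigman n H x)⁻¹

/-- The round (spherical) gradient `∇̄f` at `x ∈ S^n`: the Euclidean gradient of the
0-homogeneous extension `y ↦ f(y/‖y‖)`.  It depends only on `f|_{S^n}` and lies in `T_x S^n`. -/
def sphGrad (n : ℕ) (f : Euc n → ℝ) (x : Euc n) : Euc n :=
  gradient (fun y => f (‖y‖⁻¹ • y)) x

/-- The function `log (h^{n+2}/𝒦)` (as a function of `y`; on the sphere it agrees with the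
centro-affine expression appearing in the paper). -/
def logQ (n : ℕ) (H : Euc n → ℝ) (y : Euc n) : ℝ :=
  Real.log ((H y) ^ (n + 2) / gaussCurv n H y)

/-- The centro-affine inner product `g(∇f, ∇u) = h ⟨A[h]⁻¹ ∇̄f, ∇̄u⟩` of the `g`-gradients of
`f` and `u`, where `g = A[h]/h` is the centro-affine metric. -/
def gInner (n : ℕ) (H f u : Euc n → ℝ) (x : Euc n) : ℝ :=
  H x * ∑ i, (bmat n H x)⁻¹.mulVec (fun j => sphGrad n f x j) i * sphGrad n u x i

/-- The squared centro-affine norm `|∇f|_g²` of the `g`-gradient of `f`. -/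
def gNormSq (n : ℕ) (H f : Euc n → ℝ) (x : Euc n) : ℝ := gInner n H f f x

/-- The centro-affine Laplacian `Δf = div_g(∇ f)` (with respect to the centro-affine connection
`∇` induced by the centro-affine normal `ξ = X`, and the centro-affine metric `g = A[h]/h`),
computed via the identity `Δf = tr_g(A[hf]/h) - n f`, i.e.
`Δf = tr(B[h]⁻¹ B[hf]) - (n+1) f` where `B[u] = D²ũ + u·x xᵀ` for the 1-homogeneous
extension `ũ` of `u`. -/
def caLap (n : ℕ) (H f : Euc n → ℝ) (x : Euc n) : ℝ :=
  Matrix.trace ((bmat n H x)⁻¹ * bmat n (fun y => H y * f (‖y‖⁻¹ • y)) x) - (n + 1) * f x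

/-- The spherical Lebesgue measure on `S^n ⊂ ℝ^{n+1}` (up to a positive constant). -/
def sphMeasure (n : ℕ) : Measure (sphere (0 : Euc n) 1) :=
  (volume : Measure (Euc n)).toSphere

/-- The density of the cone-volume-type measure `dV = h σ_n dμ` with respect to the spherical
Lebesgue measure. -/
def volDens (n : ℕ) (H : Euc n → ℝ) (x : Euc n) : ℝ := H x * sigman n H x

section
open MeasureTheory Matrix Metric
open scoped RealInnerProductSpace

open scoped Pointwise in
lemma bm1_compact {K L C : Set ℝ} (hK : IsCompact K) (hL : IsCompact L) (hKn : K.Nonempty)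
    (hLn : L.Nonempty) (hC : ∀ x ∈ K, ∀ y ∈ L, (x + y) / 2 ∈ C) :
    volume K + volume L ≤ 2 * volume C := by
  obtain ⟨a, haK, ha⟩ := hK.exists_isGreatest hKn
  obtain ⟨b, hbL, hb⟩ := hL.exists_isLeast hLn
  have h1 : volume ((fun x => x + b) '' K ∪ (fun y => a + y) '' L) = volume K + volume L := by
    rw [measure_union₀]
    · simp
    · exact (hL.image (by fun_prop)).measurableSet.nullMeasurableSet
    · refine measure_mono_null (t := {a + b}) ?_ (by simp)
      rintro z ⟨⟨x, hx, rfl⟩, ⟨y, hy, hxy⟩⟩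
      have := ha hx
      have := hb hy
      simp only [Set.mem_singleton_iff] at *
      linarith
  have h2 : ((fun x => x + b) '' K ∪ (fun y => a + y) '' L) ⊆ (2:ℝ) • C := by
    rintro z (⟨x, hx, rfl⟩ | ⟨y, hy, rfl⟩)
    · exact ⟨_, hC x hx b hbL, by simp; ring⟩
    · exact ⟨_, hC a haK y hy, by simp; ring⟩
  rw [← h1]
  refine (measure_mono h2).trans ?_
  rw [Measure.addHaar_smul]
  simp

lemma bm1 {A B C : Set ℝ} (hA : MeasurableSet A) (hB : MeasurableSet B) (hAn : A.Nonempty)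
    (hBn : B.Nonempty) (hC : ∀ x ∈ A, ∀ y ∈ B, (x + y) / 2 ∈ C) :
    volume A + volume B ≤ 2 * volume C := by
  obtain ⟨a, ha⟩ := hAn
  obtain ⟨b, hb⟩ := hBn
  rw [hA.measure_eq_iSup_isCompact, hB.measure_eq_iSup_isCompact]
  simp only [iSup_and']
  have key : ∀ K L : Set ℝ, K ⊆ A → IsCompact K → L ⊆ B → IsCompact L →
      volume K + volume L ≤ 2 * volume C := by
    intro K L hKA hK hLB hL
    calc volume K + volume L ≤ volume (insert a K) + volume (insert b L) := by
          gcongr <;> exact Set.subset_insert _ _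
      _ ≤ _ := by
        apply bm1_compact (hK.insert a) (hL.insert b) (by simp) (by simp)
        intro x hx y hy
        exact hC x (Set.insert_subset ha hKA hx) y (Set.insert_subset hb hLB hy)
  refine ENNReal.biSup_add_biSup_le' ⟨∅, by simp⟩ ⟨∅, by simp⟩ ?_
  intro K hK L hL
  exact key K L hK.1 hK.2 hL.1 hL.2

lemma pl1_aux {f g h : ℝ → ℝ} (hf : Measurable f) (hg : Measurable g) (hh : Measurable h)
    (f0 : ∀ x, 0 ≤ f x) (g0 : ∀ x, 0 ≤ g x) (h0 : ∀ x, 0 ≤ h x)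
    (f1 : ∀ x, f x ≤ 1) (g1 : ∀ x, g x ≤ 1)
    (hfs : ∀ t < 1, ∃ x, t < f x) (hgs : ∀ t < 1, ∃ x, t < g x)
    (H : ∀ t > 0, ∀ x y, t < f x → t < g y → t < h ((x + y) / 2)) :
    (∫⁻ x, ENNReal.ofReal (f x)) + ∫⁻ x, ENNReal.ofReal (g x) ≤
      2 * ∫⁻ x, ENNReal.ofReal (h x) := by
  rw [lintegral_eq_lintegral_meas_lt _ (.of_forall f0) hf.aemeasurable,
    lintegral_eq_lintegral_meas_lt _ (.of_forall g0) hg.aemeasurable,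
    lintegral_eq_lintegral_meas_lt _ (.of_forall h0) hh.aemeasurable]
  have hm : ∀ f : ℝ → ℝ, Measurable fun t => volume {a | t < f a} := fun f =>
    Antitone.measurable fun s t hst => measure_mono fun x hx => lt_of_le_of_lt hst hx
  rw [← lintegral_add_left (hm f), ← lintegral_const_mul _ (hm h)]
  apply setLIntegral_mono' measurableSet_Ioi
  intro t ht
  rcases lt_or_ge t 1 with h1 | h1
  · exact bm1 (measurableSet_lt measurable_const hf) (measurableSet_lt measurable_const hg)
      (hfs t h1) (hgs t h1) (fun x hx y hy => H t ht x y hx hy)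
  · have e1 : {a | t < f a} = ∅ := by ext x; simpa using (f1 x).trans h1
    have e2 : {a | t < g a} = ∅ := by ext x; simpa using (g1 x).trans h1
    simp [e1, e2]

open scoped ENNReal NNReal in
lemma pl_one {f g h : ℝ → ℝ≥0∞} (hh : Measurable h)
    (H : ∀ x y, f x * g y ≤ h ((x + y) / 2) ^ 2) :
    (∫⁻ x, f x) * (∫⁻ x, g x) ≤ (∫⁻ x, h x) ^ 2 := by
  apply ENNReal.mul_le_of_forall_lt
  intro A hA B hB
  rw [lintegral_eq_nnreal] at hA hB
  simp only [lt_iSup_iff] at hA hB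
  obtain ⟨φ, hφ, hA⟩ := hA
  obtain ⟨ψ, hψ, hB⟩ := hB
  refine (mul_le_mul' hA.le hB.le).trans ?_
  rw [← SimpleFunc.lintegral_eq_lintegral, ← SimpleFunc.lintegral_eq_lintegral]
  simp only [SimpleFunc.coe_map, Function.comp_apply]
  obtain ⟨x0, hx0⟩ : ∃ x0, ∀ x, φ x ≤ φ x0 := by
    obtain ⟨a, ha⟩ := φ.finite_range.exists_maximal ⟨_, Set.mem_range_self 0⟩
    obtain ⟨x0, rfl⟩ := ha.1
    exact ⟨x0, fun x => by
      rcases le_total (φ x) (φ x0) with h | h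
      · exact h
      · exact ha.2 (Set.mem_range_self x) h⟩
  obtain ⟨y0, hy0⟩ : ∃ x0, ∀ x, ψ x ≤ ψ x0 := by
    obtain ⟨a, ha⟩ := ψ.finite_range.exists_maximal ⟨_, Set.mem_range_self 0⟩
    obtain ⟨x0, rfl⟩ := ha.1
    exact ⟨x0, fun x => by
      rcases le_total (ψ x) (ψ x0) with h | h
      · exact h
      · exact ha.2 (Set.mem_range_self x) h⟩
  set a := φ x0
  set b := ψ y0
  rcases eq_or_ne a 0 with ha | ha
  · have : ∀ x, φ x = 0 := fun x => le_antisymm (ha ▸ hx0 x) zero_le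
    simp [this]
  rcases eq_or_ne b 0 with hb | hb
  · have : ∀ x, ψ x = 0 := fun x => le_antisymm (hb ▸ hy0 x) zero_le
    simp [this]
  set c := NNReal.sqrt (a * b)
  have hc2 : c ^ 2 = a * b := NNReal.sq_sqrt _
  have hc : c ≠ 0 := by
    intro h0; rw [h0] at hc2; simp [ha, hb] at hc2
  have hcpos : 0 < c := pos_iff_ne_zero.2 hc
  have hapos : 0 < a := pos_iff_ne_zero.2 ha
  have hbpos : 0 < b := pos_iff_ne_zero.2 hb
  have main := pl1_aux (f := fun x => ((φ x / a : ℝ≥0) : ℝ)) (g := fun x => ((ψ x / b : ℝ≥0) : ℝ))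
    (h := fun x => (((min (h x) c).toNNReal / c : ℝ≥0) : ℝ))
    (by have := φ.measurable; fun_prop) (by have := ψ.measurable; fun_prop)
    (by fun_prop) (fun _ => by positivity) (fun _ => by positivity) (fun _ => by positivity)
    (fun x => by
      have := div_le_one_of_le₀ (hx0 x) (zero_le (a := a))
      exact_mod_cast this)
    (fun x => by
      have := div_le_one_of_le₀ (hy0 x) (zero_le (a := b))
      exact_mod_cast this)
    (fun t ht => ⟨x0, by
      change t < ((a / a : ℝ≥0) : ℝ)
      rw [div_self ha]; simpa using ht⟩)
    (fun t ht => ⟨y0, by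
      change t < ((b / b : ℝ≥0) : ℝ)
      rw [div_self hb]; simpa using ht⟩)
    (by
      intro t ht x y h1 h2
      lift t to ℝ≥0 using ht.le
      have h1 : t < φ x / a := by exact_mod_cast h1
      have h2 : t < ψ y / b := by exact_mod_cast h2
      have h3 : t < 1 := h1.trans_le (div_le_one_of_le₀ (hx0 x) (zero_le (a := a)))
      have h4 : t < (min (h ((x + y) / 2)) c).toNNReal / c := by
        rw [lt_div_iff₀ hcpos] at *
        rw [lt_div_iff₀ hapos] at h1
        rw [lt_div_iff₀ hbpos] at h2
        rw [← ENNReal.coe_lt_coe, ENNReal.coe_toNNReal (by simp)]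
        apply lt_min
        · have : ((t * c : ℝ≥0) : ℝ≥0∞) ^ 2 < h ((x + y) / 2) ^ 2 := by
            refine lt_of_lt_of_le ?_ ((mul_le_mul' (hφ x) (hψ y)).trans (H x y))
            have e : (t * c) ^ 2 < φ x * ψ y := by
              calc (t * c) ^ 2 = (t * a) * (t * b) := by rw [mul_pow, hc2]; ring
                _ < _ := by gcongr
            exact_mod_cast e
          exact (ENNReal.pow_right_strictMono two_ne_zero).lt_iff_lt.1 this
        · have : t * c < c := by nlinarith
          exact_mod_cast this
      exact_mod_cast h4)
  simp only [ENNReal.ofReal_coe_nnreal] at main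
  have e1 : ∀ (χ : SimpleFunc ℝ ℝ≥0) (d : ℝ≥0), d ≠ 0 → 
      ∫⁻ x, ((χ x / d : ℝ≥0) : ℝ≥0∞) = (∫⁻ x, (χ x : ℝ≥0∞)) * (d⁻¹ : ℝ≥0) := by
    intro χ d hd
    rw [← lintegral_mul_const' _ _ (by simp)]
    congr 1
  have e2 : ∫⁻ x, (((min (h x) c).toNNReal / c : ℝ≥0) : ℝ≥0∞) ≤ (∫⁻ x, h x) * (c⁻¹ : ℝ≥0) := by
    rw [← lintegral_mul_const' _ _ (by simp)]
    refine lintegral_mono fun x => ?_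
    rw [div_eq_mul_inv, ENNReal.coe_mul, ENNReal.coe_toNNReal (by simp)]
    gcongr
    exact min_le_left _ _
  rw [e1 φ a ha, e1 ψ b hb] at main
  have main := main.trans (mul_le_mul_right e2 2)
  generalize (∫⁻ x, (φ x : ℝ≥0∞)) = P at *
  generalize (∫⁻ x, (ψ x : ℝ≥0∞)) = Q at *
  generalize (∫⁻ x, (h x : ℝ≥0∞)) = R at *
  rcases eq_or_ne R ⊤ with rfl | hR
  · simp
  lift R to ℝ≥0 using hR
  have hlt : P * (a⁻¹ : ℝ≥0) + Q * (b⁻¹ : ℝ≥0) < ⊤ := main.trans_lt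
    (ENNReal.mul_lt_top (by simp) (ENNReal.mul_lt_top (by simp) (by simp)))
  have hP : P ≠ ⊤ := by rintro rfl; simp [ENNReal.top_mul, ha] at hlt
  have hQ : Q ≠ ⊤ := by rintro rfl; simp [ENNReal.top_mul, hb] at hlt
  lift P to ℝ≥0 using hP
  lift Q to ℝ≥0 using hQ
  have main : P * a⁻¹ + Q * b⁻¹ ≤ 2 * (R * c⁻¹) := by exact_mod_cast main
  have : P * Q ≤ R ^ 2 := by
    have main' : (P:ℝ) * (a:ℝ)⁻¹ + Q * (b:ℝ)⁻¹ ≤ 2 * (R * (c:ℝ)⁻¹) := by exact_mod_cast main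
    have hc2' : (c:ℝ) ^ 2 = a * b := by exact_mod_cast hc2
    have h0 : 0 ≤ (P:ℝ) * (a:ℝ)⁻¹ + Q * (b:ℝ)⁻¹ := by positivity
    have h5 : ((P:ℝ) * (a:ℝ)⁻¹) * (Q * (b:ℝ)⁻¹) ≤ (R * (c:ℝ)⁻¹) ^ 2 := by
      nlinarith [sq_nonneg ((P:ℝ) * (a:ℝ)⁻¹ - Q * (b:ℝ)⁻¹)]
    have h6 : (R * (c:ℝ)⁻¹) ^ 2 = (R:ℝ) ^ 2 * ((a:ℝ)⁻¹ * (b:ℝ)⁻¹) := by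
      rw [mul_pow, inv_pow, hc2', mul_inv]
    rw [h6] at h5
    have hab : 0 < (a:ℝ)⁻¹ * (b:ℝ)⁻¹ := by positivity
    have : (P:ℝ) * Q ≤ R ^ 2 := by
      refine le_of_mul_le_mul_right ?_ hab
      linarith
    exact_mod_cast this
  exact_mod_cast this

open scoped ENNReal NNReal in
lemma pl_pi (N : ℕ) : ∀ {f g h : (Fin N → ℝ) → ℝ≥0∞}, Measurable f → Measurable g → Measurable h →
    (∀ x y, f x * g y ≤ h (fun i => (x i + y i) / 2) ^ 2) →
    (∫⁻ x, f x) * (∫⁻ x, g x) ≤ (∫⁻ x, h x) ^ 2 := by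
  induction N with
  | zero =>
    intro f g h _ _ _ H
    have hu : (volume : Measure (Fin 0 → ℝ)) Set.univ = 1 := by
      simp [volume_pi]
    have := H default default
    simp only [lintegral_unique, hu, mul_one]
    convert this
  | succ N ih =>
    intro f g h hf hg hh H
    let e := (MeasurableEquiv.piFinSuccAbove (fun _ : Fin (N+1) => ℝ) 0)
    have he : MeasurePreserving e.symm := (volume_preserving_piFinSuccAbove (fun _ => ℝ) 0).symm _
    have key : ∀ f : (Fin (N+1) → ℝ) → ℝ≥0∞, Measurable f →
        ∫⁻ x, f x = ∫⁻ t, ∫⁻ y, f (e.symm (t, y)) := by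
      intro f hf
      rw [← he.lintegral_comp hf]
      exact lintegral_prod _ (hf.comp e.symm.measurable).aemeasurable
    rw [key f hf, key g hg, key h hh]
    have hm : ∀ f : (Fin (N+1) → ℝ) → ℝ≥0∞, Measurable f →
        Measurable fun p => f (e.symm p) := fun f hf => hf.comp e.symm.measurable
    apply pl_one
    · exact (hm h hh).lintegral_prod_right'
    · intro s t
      apply ih
      · exact (hm f hf).comp measurable_prodMk_left
      · exact (hm g hg).comp measurable_prodMk_left
      · exact (hm h hh).comp measurable_prodMk_left
      · intro x y
        refine (H _ _).trans_eq ?_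
        congr 2
        ext i
        refine Fin.cases ?_ ?_ i
        · simp [e, MeasurableEquiv.piFinSuccAbove, Fin.insertNthEquiv]
        · intro j; simp [e, MeasurableEquiv.piFinSuccAbove, Fin.insertNthEquiv]

/-- Multiplicative Brunn-Minkowski. -/
lemma bm_euc {N : ℕ} {A B C : Set (EuclideanSpace ℝ (Fin N))} (hA : MeasurableSet A)
    (hB : MeasurableSet B) (hC : MeasurableSet C)
    (H : ∀ x ∈ A, ∀ y ∈ B, (1/2 : ℝ) • (x + y) ∈ C) :
    volume A * volume B ≤ volume C ^ 2 := by
  have e := (EuclideanSpace.volume_preserving_symm_measurableEquiv_toLp (Fin N)).symm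
  rw [← e.measure_preimage hA.nullMeasurableSet, ← e.measure_preimage hB.nullMeasurableSet,
    ← e.measure_preimage hC.nullMeasurableSet]
  have hA' := e.measurable hA
  have hB' := e.measurable hB
  have hC' := e.measurable hC
  rw [← lintegral_indicator_one hA', ← lintegral_indicator_one hB', ← lintegral_indicator_one hC']
  apply pl_pi
  · exact measurable_one.indicator hA'
  · exact measurable_one.indicator hB'
  · exact measurable_one.indicator hC'
  · intro x y
    by_cases hx : (WithLp.toLp 2 x) ∈ A
    · by_cases hy : (WithLp.toLp 2 y) ∈ B
      · have := H _ hx _ hy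
        have h2 : WithLp.toLp 2 (fun i => (x i + y i) / 2) ∈ C := by
          convert this using 1
          ext i; simp; ring
        simp [Set.indicator, hx, hy, h2]
      · simp [Set.indicator, hy]
    · simp [Set.indicator, hx]

end

section

/-- standing assumptions -/
structure Good (n : ℕ) (H : Euc n → ℝ) : Prop where
  hom : ∀ c : ℝ, 0 < c → ∀ x : Euc n, H (c • x) = c * H x
  conv : ConvexOn ℝ Set.univ H
  smooth : ContDiffOn ℝ (⊤ : ℕ∞) H {(0 : Euc n)}ᶜ
  pos : ∀ x ∈ sphere (0 : Euc n) 1, 0 < H x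
  pd : ∀ x ∈ sphere (0 : Euc n) 1, (bmat n H x).PosDef

/-- derivative of the gradient -/
def Em {n : ℕ} (H : Euc n → ℝ) (y : Euc n) : Euc n →L[ℝ] Euc n := fderiv ℝ (gradient H) y

namespace Good
variable {n : ℕ} {H : Euc n → ℝ}

lemma smoothAt (G : Good n H) {y : Euc n} (hy : y ≠ 0) : ContDiffAt ℝ (⊤ : ℕ∞) H y :=
  G.smooth.contDiffAt (isOpen_compl_singleton.mem_nhds hy)

lemma gradSmoothAt (G : Good n H) {y : Euc n} (hy : y ≠ 0) :
    ContDiffAt ℝ (⊤ : ℕ∞) (gradient H) y := by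
  have h1 : ContDiffAt ℝ (⊤ : ℕ∞) (fderiv ℝ H) y :=
    (G.smoothAt hy).fderiv_right (by exact le_rfl)
  exact (InnerProductSpace.toDual ℝ (Euc n)).symm.toContinuousLinearEquiv.contDiff.contDiffAt.comp y h1

lemma hasFDeriv (G : Good n H) {y : Euc n} (hy : y ≠ 0) :
    HasFDerivAt H (innerSL ℝ (gradient H y)) y :=
  ((G.smoothAt hy).differentiableAt (by simp)).hasGradientAt

lemma hasE (G : Good n H) {y : Euc n} (hy : y ≠ 0) :
    HasFDerivAt (gradient H) (Em H y) y :=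
  ((G.gradSmoothAt hy).differentiableAt (by simp)).hasFDerivAt

lemma hasEs (G : Good n H) {y : Euc n} (hy : y ≠ 0) :
    HasStrictFDerivAt (gradient H) (Em H y) y :=
  (G.gradSmoothAt hy).hasStrictFDerivAt (by simp)

lemma E_cont (G : Good n H) {y : Euc n} (hy : y ≠ 0) : ContinuousAt (Em H) y :=
  (((G.gradSmoothAt hy).fderiv_right (m := 0) (by simp))).continuousAt

lemma euler (G : Good n H) {y : Euc n} (hy : y ≠ 0) : ⟪gradient H y, y⟫ = H y := by
  have h1 : HasDerivAt (fun t : ℝ => H (t • y)) (⟪gradient H y, y⟫) 1 := by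
    have h2 : HasDerivAt (fun t : ℝ => t • y) y 1 := by
      simpa using (hasDerivAt_id (1:ℝ)).smul_const y
    exact (G.hasFDeriv hy).comp_hasDerivAt_of_eq (1:ℝ) h2 (by simp)
  have h3 : HasDerivAt (fun t : ℝ => t * H y) (H y) 1 := by
    simpa using (hasDerivAt_id (1:ℝ)).mul_const (H y)
  refine h1.unique (h3.congr_of_eventuallyEq ?_)
  filter_upwards [lt_mem_nhds (zero_lt_one' ℝ)] with t ht using G.hom t ht y

lemma grad_hom (G : Good n H) {y : Euc n} (hy : y ≠ 0) {c : ℝ} (hc : 0 < c) :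
    gradient H (c • y) = gradient H y := by
  have hcy : c • y ≠ 0 := smul_ne_zero hc.ne' hy
  have h1 : HasFDerivAt (fun z => H (c • z)) ((innerSL ℝ (gradient H (c • y))).comp
      (c • ContinuousLinearMap.id ℝ (Euc n))) y := by
    have h2 : HasFDerivAt (fun z : Euc n => c • z) (c • ContinuousLinearMap.id ℝ (Euc n)) y :=
      (hasFDerivAt_id y).const_smul c
    exact (G.hasFDeriv hcy).comp y h2
  have h3 : HasFDerivAt (fun z => H (c • z)) (c • innerSL ℝ (gradient H y)) y := by
    refine ((G.hasFDeriv hy).const_mul c).congr_of_eventuallyEq (.of_forall fun z => G.hom c hc z)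
  have := h1.unique h3
  apply ext_inner_right ℝ
  intro v
  have := DFunLike.congr_fun this v
  change ⟪gradient H (c • y), c • v⟫ = c * ⟪gradient H y, v⟫ at this
  rw [inner_smul_right] at this
  exact mul_left_cancel₀ hc.ne' this

lemma E_hom (G : Good n H) {y : Euc n} (hy : y ≠ 0) {c : ℝ} (hc : 0 < c) (v : Euc n) :
    c • Em H (c • y) v = Em H y v := by
  have hcy : c • y ≠ 0 := smul_ne_zero hc.ne' hy
  have h1 : HasFDerivAt (fun z => gradient H (c • z)) ((Em H (c • y)).comp
      (c • ContinuousLinearMap.id ℝ (Euc n))) y := by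
    have h2 : HasFDerivAt (fun z : Euc n => c • z) (c • ContinuousLinearMap.id ℝ (Euc n)) y :=
      (hasFDerivAt_id y).const_smul c
    exact (G.hasE hcy).comp y h2
  have h3 := (G.hasE hy).congr_of_eventuallyEq (f₁ := fun z => gradient H (c • z)) (by
    filter_upwards [isOpen_compl_singleton.mem_nhds hy] with z hz using G.grad_hom hz hc)
  have := DFunLike.congr_fun (h1.unique h3) v
  simpa using this

lemma E_self (G : Good n H) {y : Euc n} (hy : y ≠ 0) : Em H y y = 0 := by
  have h1 : HasDerivAt (fun t : ℝ => gradient H (t • y)) (Em H y y) 1 := by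
    have h2 : HasDerivAt (fun t : ℝ => t • y) y 1 := by
      simpa using (hasDerivAt_id (1:ℝ)).smul_const y
    exact (G.hasE hy).comp_hasDerivAt_of_eq (1:ℝ) h2 (by simp)
  refine h1.unique ((hasDerivAt_const (1:ℝ) (gradient H y)).congr_of_eventuallyEq ?_)
  filter_upwards [lt_mem_nhds (zero_lt_one' ℝ)] with t ht using G.grad_hom hy ht

lemma ehess_eq (G : Good n H) {y : Euc n} (hy : y ≠ 0) (i j : Fin (n+1)) :
    ehess n H y i j = (Em H y (EuclideanSpace.single i 1)) j := by
  have h1 : (fun z => fderiv ℝ H z (EuclideanSpace.single j 1)) =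
      fun z => (EuclideanSpace.proj j : Euc n →L[ℝ] ℝ) (gradient H z) := by
    ext z
    rw [← toDual_gradient]
    change ⟪gradient H z, EuclideanSpace.single j 1⟫ = (gradient H z) j
    rw [EuclideanSpace.inner_single_right]; simp
  simp only [ehess, of_apply]
  have h2 : HasFDerivAt (fun z => (EuclideanSpace.proj j : Euc n →L[ℝ] ℝ) (gradient H z))
    ((EuclideanSpace.proj j : Euc n →L[ℝ] ℝ).comp (Em H y)) y :=
    (EuclideanSpace.proj j : Euc n →L[ℝ] ℝ).hasFDerivAt.comp y (G.hasE hy)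
  rw [h1, h2.fderiv]
  simp

lemma ne0 {x : Euc n} (hx : x ∈ sphere (0 : Euc n) 1) : x ≠ 0 := by
  rintro rfl; simp at hx

lemma E_expand (H : Euc n → ℝ) (x d : Euc n) :
    Em H x d = ∑ i, d i • Em H x (EuclideanSpace.single i 1) := by
  conv_lhs => rw [← (EuclideanSpace.basisFun (Fin (n+1)) ℝ).sum_repr d]
  simp

lemma E_symm (G : Good n H) {x : Euc n} (hx : x ∈ sphere (0 : Euc n) 1) (d e : Euc n) :
    ⟪Em H x d, e⟫ = ⟪d, Em H x e⟫ := by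
  have hs : ∀ i j, Em H x (EuclideanSpace.single i 1) j = Em H x (EuclideanSpace.single j 1) i := by
    intro i j
    rw [← G.ehess_eq (ne0 hx), ← G.ehess_eq (ne0 hx)]
    have := (G.pd x hx).1.apply i j
    simp [bmat, mul_comm (x.ofLp j)] at this
    exact this.symm
  rw [E_expand H x d, E_expand H x e]
  simp only [PiLp.inner_apply, WithLp.ofLp_sum, WithLp.ofLp_smul, Finset.sum_apply, Pi.smul_apply,
    smul_eq_mul, RCLike.inner_apply, conj_trivial, Finset.mul_sum, Finset.sum_mul]
  rw [Finset.sum_comm]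
  refine Finset.sum_congr rfl fun i _ => Finset.sum_congr rfl fun j _ => ?_
  rw [hs i j]; ring

lemma B_pos (G : Good n H) {x : Euc n} (hx : x ∈ sphere (0 : Euc n) 1) {d : Euc n} (hd : d ≠ 0) :
    0 < ⟪Em H x d, d⟫ + H x * ⟪x, d⟫ ^ 2 := by
  have h := (G.pd x hx).dotProduct_mulVec_pos (x := d.ofLp) (by
    intro h; apply hd; ext i; simp [h])
  refine h.trans_eq ?_
  rw [E_expand H x d]
  simp only [PiLp.inner_apply, WithLp.ofLp_sum, WithLp.ofLp_smul, Finset.sum_apply, Pi.smul_apply,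
    smul_eq_mul, RCLike.inner_apply, conj_trivial, Finset.mul_sum, Finset.sum_mul, dotProduct,
    mulVec, bmat, star_trivial, Matrix.add_apply, of_apply, sq, G.ehess_eq (ne0 hx), mul_add, add_mul,
    Finset.sum_add_distrib]
  congr 1
  · rw [Finset.sum_comm]
    refine Finset.sum_congr rfl fun i _ => Finset.sum_congr rfl fun j _ => ?_
    ring
  · refine Finset.sum_congr rfl fun i _ => Finset.sum_congr rfl fun j _ => ?_
    ring

lemma E_psd (G : Good n H) {x : Euc n} (hx : x ∈ sphere (0 : Euc n) 1) (d : Euc n) :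
    0 ≤ ⟪Em H x d, d⟫ := by
  set d' := d - ⟪x, d⟫ • x
  have hxx : ⟪x, x⟫ = 1 := by
    rw [real_inner_self_eq_norm_sq]; simp at hx; simp [hx]
  have h1 : ⟪Em H x d, d⟫ = ⟪Em H x d', d'⟫ := by
    have : Em H x d' = Em H x d := by simp [d', G.E_self (ne0 hx)]
    rw [this]
    simp only [d', inner_sub_right, inner_smul_right]
    rw [G.E_symm hx d x, G.E_self (ne0 hx)]; simp
  have h2 : ⟪x, d'⟫ = 0 := by rw [inner_sub_right, inner_smul_right, hxx]; ring
  rw [h1]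
  rcases eq_or_ne d' 0 with h | h
  · simp [h]
  · have := G.B_pos hx h
    rw [h2] at this; nlinarith

/-- Cauchy-Schwarz/Young. -/
lemma E_young (G : Good n H) {x : Euc n} (hx : x ∈ sphere (0 : Euc n) 1) (w d : Euc n) {a : ℝ}
    (ha : 0 < a) :
    ⟪w, Em H x d⟫ ≤ a / 2 * ⟪Em H x d, d⟫ + 1 / (2 * a) * ⟪Em H x w, w⟫ := by
  have h := G.E_psd hx (a • d - w)
  simp only [map_sub, map_smul, inner_sub_left, inner_sub_right, inner_smul_left, inner_smul_right,
    conj_trivial] at h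
  have h2 : ⟪Em H x w, d⟫ = ⟪w, Em H x d⟫ := G.E_symm hx w d
  have h3 : ⟪Em H x d, w⟫ = ⟪w, Em H x d⟫ := real_inner_comm _ _
  rw [h2, h3] at h
  have : ⟪w, Em H x d⟫ = (2 * a * ⟪w, Em H x d⟫) / (2 * a) := by field_simp
  rw [this, div_le_iff₀ (by positivity)]
  field_simp
  nlinarith

lemma B_coer (G : Good n H) {x : Euc n} (hx : x ∈ sphere (0 : Euc n) 1) :
    ∃ c > 0, ∀ d : Euc n, c * ‖d‖ ^ 2 ≤ ⟪Em H x d, d⟫ + H x * ⟪x, d⟫ ^ 2 := by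
  have hc : IsCompact (sphere (0 : Euc n) 1) := isCompact_sphere _ _
  obtain ⟨d0, hd0, hmin⟩ := hc.exists_isMinOn ⟨x, hx⟩
    (f := fun d => ⟪Em H x d, d⟫ + H x * ⟪x, d⟫ ^ 2) (by fun_prop)
  refine ⟨_, G.B_pos hx (ne0 hd0), fun d => ?_⟩
  rcases eq_or_ne d 0 with rfl | hd
  · simp
  have hn : 0 < ‖d‖ := norm_pos_iff.2 hd
  have h := hmin (show ‖d‖⁻¹ • d ∈ sphere (0 : Euc n) 1 by simp [norm_smul, hn.ne'])
  simp only [Set.mem_ofPred_eq, map_smul, inner_smul_left, inner_smul_right, conj_trivial] at h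
  have e : ‖d‖ ^ 2 * (‖d‖⁻¹ * (‖d‖⁻¹ * ⟪Em H x d, d⟫) + H x * (‖d‖⁻¹ * ⟪x, d⟫) ^ 2) =
    ⟪Em H x d, d⟫ + H x * ⟪x, d⟫ ^ 2 := by field_simp
  rw [← e, mul_comm]
  gcongr

end Good

end

section

open scoped Topology

namespace Good
variable {n : ℕ} {H : Euc n → ℝ}

lemma taylor (G : Good n H) {x0 : Euc n} (hx0 : x0 ∈ sphere (0 : Euc n) 1) {η : ℝ} (hη : 0 < η) :
    ∀ᶠ p : Euc n × Euc n in 𝓝 (x0, x0),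
      ‖H p.2 - H p.1 - ⟪gradient H p.1, p.2 - p.1⟫ - 1/2 * ⟪Em H x0 (p.2 - p.1), p.2 - p.1⟫‖
        ≤ η * ‖p.2 - p.1‖ ^ 2 := by
  have h1 := (hasStrictFDerivAt_iff_isLittleO.1 (G.hasEs (ne0 hx0))).def hη
  have h2 : ∀ᶠ p : Euc n × Euc n in 𝓝 (x0, x0), p.1 ≠ 0 :=
    (continuous_fst.tendsto (x0, x0)).eventually (isOpen_compl_singleton.mem_nhds (ne0 hx0))
  obtain ⟨ε, hε, hb⟩ := Metric.eventually_nhds_iff_ball.1 (h1.and h2)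
  refine Metric.eventually_nhds_iff_ball.2 ⟨ε, hε, ?_⟩
  rintro ⟨x, ξ⟩ hp
  rw [← ball_prod_same] at hp hb
  obtain ⟨hx, hξ⟩ : x ∈ ball x0 ε ∧ ξ ∈ ball x0 ε := hp
  have hseg : segment ℝ x ξ ⊆ ball x0 ε := (convex_ball x0 ε).segment_subset hx hξ
  simp only
  have key := (convex_segment x ξ).norm_image_sub_le_of_norm_hasFDerivWithin_le
    (f := fun y => H y - ⟪gradient H x, y⟫ - 1/2 * ⟪Em H x0 (y - x), y - x⟫)
    (f' := fun y => innerSL ℝ (gradient H y - gradient H x - Em H x0 (y - x)))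
    (C := η * ‖ξ - x‖) (x := x) (y := ξ) ?_ ?_ (left_mem_segment ℝ x ξ) (right_mem_segment ℝ x ξ)
  · convert key using 1
    · congr 1; simp [inner_sub_right]; ring
    · ring
  · intro y hy
    have hyb := hseg hy
    have hy0 : y ≠ 0 := (hb (y, y) ⟨hyb, hyb⟩).2
    apply HasFDerivAt.hasFDerivWithinAt
    have e1 := G.hasFDeriv hy0
    have e2 : HasFDerivAt (fun y => ⟪gradient H x, y⟫) (innerSL ℝ (gradient H x)) y :=
      (innerSL ℝ (gradient H x)).hasFDerivAt
    have e3 : HasFDerivAt (fun y : Euc n => y - x) (ContinuousLinearMap.id ℝ (Euc n)) y :=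
      (hasFDerivAt_id y).sub_const x
    have e4 : HasFDerivAt (fun y : Euc n => Em H x0 (y - x)) (Em H x0) y :=
      ((Em H x0).hasFDerivAt (x := y - x)).comp y e3
    have e5 := (e4.inner ℝ e3).const_mul (1/2)
    refine ((e1.sub e2).sub e5).congr_fderiv ?_
    ext v
    symm
    have hs := G.E_symm hx0 v (y - x)
    have hc : ⟪v, Em H x0 (y - x)⟫ = ⟪Em H x0 (y - x), v⟫ := real_inner_comm _ _
    rw [hc] at hs
    change ⟪gradient H y - gradient H x - Em H x0 (y - x), v⟫ = ⟪gradient H y, v⟫ - ⟪gradient H x, v⟫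
      - 1/2 * (⟪Em H x0 (y - x), v⟫ + ⟪Em H x0 v, y - x⟫)
    rw [hs, inner_sub_left, inner_sub_left]
    ring
  · intro y hy
    have hyb := hseg hy
    have := (hb (y, x) ⟨hyb, hx⟩).1
    rw [innerSL_apply_norm]
    refine this.trans ?_
    gcongr
    simp only
    rw [segment_eq_image'] at hy
    obtain ⟨t, ht, rfl⟩ := hy
    simp only [add_sub_cancel_left, norm_smul, Real.norm_eq_abs, abs_of_nonneg ht.1]
    exact mul_le_of_le_one_left (norm_nonneg _) ht.2

lemma lower (G : Good n H) {x0 : Euc n} (hx0 : x0 ∈ sphere (0 : Euc n) 1) :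
    ∃ c > 0, ∀ η > 0, ∀ᶠ p : Euc n × Euc n in 𝓝 (x0, x0),
      p.1 ∈ sphere (0 : Euc n) 1 → p.2 ∈ sphere (0 : Euc n) 1 →
      c * ‖p.2 - p.1‖ ^ 2 ≤ ⟪Em H x0 (p.2 - p.1), p.2 - p.1⟫ ∧
      1/2 * ⟪Em H x0 (p.2 - p.1), p.2 - p.1⟫ - η * ‖p.2 - p.1‖ ^ 2 ≤ H p.2 - ⟪gradient H p.1, p.2⟫ := by
  obtain ⟨c, hc, hB⟩ := G.B_coer hx0
  refine ⟨c / 2, by positivity, fun η hη => ?_⟩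
  have hcont : Filter.Tendsto (fun p : Euc n × Euc n =>
      H x0 * ‖x0 - (1/2 : ℝ) • (p.1 + p.2)‖ ^ 2) (𝓝 (x0, x0)) (𝓝 0) := by
    have : Continuous (fun p : Euc n × Euc n => H x0 * ‖x0 - (1/2 : ℝ) • (p.1 + p.2)‖ ^ 2) := by
      fun_prop
    convert this.tendsto (x0, x0) using 2
    have : x0 - (1/2 : ℝ) • (x0 + x0) = 0 := by rw [← two_smul ℝ x0, smul_smul]; simp
    simp only [this]
    simp
  filter_upwards [G.taylor hx0 hη, hcont.eventually (gt_mem_nhds (show 0 < c / 2 by positivity))]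
    with p h1 h2 hp1 hp2
  have hn1 : ‖p.1‖ = 1 := by simpa using hp1
  have hn2 : ‖p.2‖ = 1 := by simpa using hp2
  have e1 : ⟪x0, p.2 - p.1⟫ = ⟪x0 - (1/2 : ℝ) • (p.1 + p.2), p.2 - p.1⟫ := by
    have : ⟪p.1 + p.2, p.2 - p.1⟫ = 0 := by
      simp only [inner_sub_right, inner_add_left, real_inner_self_eq_norm_sq, hn1, hn2]
      rw [real_inner_comm]; ring
    rw [inner_sub_left, inner_smul_left, this]; simp
  have hh := G.pos x0 hx0
  have e2 : H x0 * ⟪x0, p.2 - p.1⟫ ^ 2 ≤ c / 2 * ‖p.2 - p.1‖ ^ 2 := by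
    rw [e1]
    have := abs_real_inner_le_norm (x0 - (1/2 : ℝ) • (p.1 + p.2)) (p.2 - p.1)
    calc _ = H x0 * |⟪x0 - (1/2 : ℝ) • (p.1 + p.2), p.2 - p.1⟫| ^ 2 := by rw [sq_abs]
      _ ≤ H x0 * (‖x0 - (1/2 : ℝ) • (p.1 + p.2)‖ * ‖p.2 - p.1‖) ^ 2 := by gcongr
      _ = (H x0 * ‖x0 - (1/2 : ℝ) • (p.1 + p.2)‖ ^ 2) * ‖p.2 - p.1‖ ^ 2 := by ring
      _ ≤ _ := by gcongr
  have e3 := hB (p.2 - p.1)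
  refine ⟨by linarith, ?_⟩
  have h4 := (abs_le.1 h1).1
  rw [inner_sub_right, G.euler (ne0 hp1)] at h4
  linarith

lemma support_le (G : Good n H) {x : Euc n} (hx : x ≠ 0) (ξ : Euc n) :
    ⟪gradient H x, ξ⟫ ≤ H ξ := by
  -- the function t ↦ H(x + t(ξ-x)) is convex
  let g : ℝ → ℝ := fun t => H (x + t • (ξ - x))
  have hg : ConvexOn ℝ Set.univ g := by
    have := G.conv.comp_affineMap (AffineMap.lineMap x ξ : ℝ →ᵃ[ℝ] Euc n)
    rw [Set.preimage_univ] at this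
    have e : g = H ∘ ⇑(AffineMap.lineMap x ξ : ℝ →ᵃ[ℝ] Euc n) := by
      ext t; simp [g, AffineMap.lineMap_apply, add_comm]
    rw [e]; exact this
  have hd : HasDerivAt g ⟪gradient H x, ξ - x⟫ 0 := by
    have h2 : HasDerivAt (fun t : ℝ => x + t • (ξ - x)) (ξ - x) 0 := by
      simpa using ((hasDerivAt_id (0:ℝ)).smul_const (ξ - x)).const_add x
    exact (G.hasFDeriv hx).comp_hasDerivAt_of_eq (0:ℝ) h2 (by simp)
  have := hg.le_slope_of_hasDerivAt (Set.mem_univ 0) (Set.mem_univ 1) zero_lt_one hd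
  simp only [slope_def_field, g, inner_sub_right, G.euler hx] at this
  simp at this ⊢
  linarith

lemma support_lt (G : Good n H) {x ξ : Euc n} (hx : x ∈ sphere (0 : Euc n) 1)
    (hξ : ξ ∈ sphere (0 : Euc n) 1) (hne : ξ ≠ x) :
    ⟪gradient H x, ξ⟫ < H ξ := by
  refine lt_of_le_of_ne (G.support_le (ne0 hx) ξ) fun heq => ?_
  have hn1 : ‖x‖ = 1 := by simpa using hx
  have hn2 : ‖ξ‖ = 1 := by simpa using hξ
  obtain ⟨c, hc, hl⟩ := G.lower hx
  -- points on the segment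
  let y : ℝ → Euc n := fun t => x + t • (ξ - x)
  have hy0 : y 0 = x := by simp [y]
  have hyc : Continuous y := by fun_prop
  have hyne : ∀ᶠ t in 𝓝 (0:ℝ), y t ≠ 0 :=
    hyc.continuousAt.eventually_ne (by rw [hy0]; exact ne0 hx)
  have hlim : Filter.Tendsto (fun t => (x, ‖y t‖⁻¹ • y t)) (𝓝 0) (𝓝 (x, x)) := by
    refine tendsto_const_nhds.prodMk_nhds ?_
    have : ContinuousAt (fun t => ‖y t‖⁻¹ • y t) 0 := by
      exact (hyc.norm.continuousAt.inv₀ (by simp [hy0, hn1])).smul hyc.continuousAt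
    have h := this.tendsto
    simpa [hy0, hn1] using h
  have hev := hlim.eventually (hl (c / 4) (by positivity))
  have hIoo : ∀ᶠ t in 𝓝[>] (0:ℝ), t ∈ Set.Ioo (0:ℝ) 1 := Ioo_mem_nhdsGT zero_lt_one
  obtain ⟨t, ⟨h1, h2⟩, ht⟩ := ((Filter.Eventually.filter_mono nhdsWithin_le_nhds
    (hyne.and hev)).and hIoo).exists
  have hyt : 0 < ‖y t‖ := norm_pos_iff.2 h1
  obtain ⟨h3, h4⟩ := h2 hx (by simp [norm_smul, hyt.ne'])
  simp only at h3 h4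
  -- H (y t) = ⟪X, y t⟫
  have h5 : H (y t) ≤ ⟪gradient H x, y t⟫ := by
    obtain ⟨_, cv⟩ := G.conv
    have := cv (Set.mem_univ x) (Set.mem_univ ξ) (show 0 ≤ 1 - t by linarith [ht.2])
      ht.1.le (by ring)
    have e : y t = (1 - t) • x + t • ξ := by simp only [y]; module
    rw [e]
    refine this.trans_eq ?_
    rw [inner_add_right, inner_smul_right, inner_smul_right, heq, G.euler (ne0 hx)]
    simp
  have h6 : H (‖y t‖⁻¹ • y t) - ⟪gradient H x, ‖y t‖⁻¹ • y t⟫ ≤ 0 := by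
    rw [G.hom _ (by positivity), inner_smul_right]
    have : ‖y t‖⁻¹ * (H (y t) - ⟪gradient H x, y t⟫) ≤ 0 :=
      mul_nonpos_of_nonneg_of_nonpos (by positivity) (by linarith)
    linarith
  have h7 : ‖‖y t‖⁻¹ • y t - x‖ ^ 2 ≤ 0 := by nlinarith
  have h8 : ‖y t‖⁻¹ • y t = x := by
    have : ‖‖y t‖⁻¹ • y t - x‖ = 0 := by nlinarith [norm_nonneg (‖y t‖⁻¹ • y t - x)]
    exact sub_eq_zero.1 (norm_eq_zero.1 this)
  -- so ξ is parallel to x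
  have h9 : y t = ‖y t‖ • x := by
    conv_rhs => rw [← h8, smul_smul, mul_inv_cancel₀ hyt.ne', one_smul]
  have h10 : ξ = ((‖y t‖ - 1 + t) / t) • x := by
    have e : y t = (1 - t) • x + t • ξ := by simp only [y]; module
    rw [e] at h9
    have : t • ξ = (‖y t‖ - 1 + t) • x := by
      rw [← e] at h9
      have : t • ξ = y t - (1 - t) • x := by rw [e]; module
      rw [this]; nth_rw 1 [h9]; module
    rw [div_eq_inv_mul, mul_smul, ← this, smul_smul, inv_mul_cancel₀ ht.1.ne', one_smul]
  set k := (‖y t‖ - 1 + t) / t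
  have hk : |k| = 1 := by
    have := hn2; rw [h10, norm_smul, hn1] at this; simpa using this
  rcases (abs_eq zero_le_one).1 hk with hk | hk
  · rw [hk, one_smul] at h10; exact hne h10
  · rw [hk] at h10
    have hp := G.pos ξ hξ
    rw [← heq, h10, inner_smul_right, G.euler (ne0 hx)] at hp
    linarith [G.pos x hx]

end Good

end

section

/-- the parametrization -/
def Tm {n : ℕ} (H : Euc n → ℝ) (y : Euc n) : Euc n := ‖y‖ • gradient H y

/-- its derivative on the unit sphere -/
def Tl {n : ℕ} (H : Euc n → ℝ) (x : Euc n) : Euc n →L[ℝ] Euc n :=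
  Em H x + (innerSL ℝ x).smulRight (gradient H x)

/-- radial domain -/
def Us {n : ℕ} (s : Euc n → ℝ) : Set (Euc n) := {y | y ≠ 0 ∧ ‖y‖ < s (‖y‖⁻¹ • y)}

namespace Good
variable {n : ℕ} {H : Euc n → ℝ}

lemma nrm_mem {y : Euc n} (hy : y ≠ 0) : ‖y‖⁻¹ • y ∈ sphere (0 : Euc n) 1 := by
  have := norm_pos_iff.2 hy
  simp [norm_smul, this.ne']

lemma volDens_eq (G : Good n H) {x : Euc n} (hx : x ∈ sphere (0 : Euc n) 1) :
    volDens n H x = (bmat n H x).det := by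
  unfold volDens sigman
  rw [mul_div_cancel₀ _ (G.pos x hx).ne']

lemma volDens_pos (G : Good n H) {x : Euc n} (hx : x ∈ sphere (0 : Euc n) 1) :
    0 < volDens n H x := by
  rw [G.volDens_eq hx]; exact (G.pd x hx).det_pos

lemma det_Tl (G : Good n H) {x : Euc n} (hx : x ∈ sphere (0 : Euc n) 1) :
    (Tl H x).det = volDens n H x := by
  have hh := (G.pos x hx).ne'
  have hxx : ∑ i, x i * x i = 1 := by
    have h1 : ‖x‖ = 1 := by simpa using hx
    have := real_inner_self_eq_norm_sq x
    rw [h1, PiLp.inner_apply] at this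
    refine Eq.trans ?_ (this.trans (by norm_num))
    rfl
  have hXx : ∑ i, x i * gradient H x i = H x := by
    have := G.euler (ne0 hx)
    rw [PiLp.inner_apply] at this
    simpa using this
  have hbx : ∀ j, ∑ i, x i * bmat n H x i j = H x * x j := by
    intro j
    have e0 : (Em H x x) j = 0 := by rw [G.E_self (ne0 hx)]; rfl
    rw [E_expand H x x] at e0
    simp only [WithLp.ofLp_sum, WithLp.ofLp_smul, Finset.sum_apply, Pi.smul_apply, smul_eq_mul] at e0
    simp only [bmat, Matrix.add_apply, Matrix.of_apply, G.ehess_eq (ne0 hx), mul_add,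
      Finset.sum_add_distrib, e0, zero_add]
    calc ∑ i, x i * (H x * (x i * x j)) = (∑ i, x i * x i) * (H x * x j) := by
          rw [Finset.sum_mul]; congr 1; ext i; ring
      _ = _ := by rw [hxx, one_mul]
  set b := (EuclideanSpace.basisFun (Fin (n+1)) ℝ).toBasis
  let a : Fin (n+1) → ℝ := fun i => (gradient H x i - H x * x i) / H x
  have hM : LinearMap.toMatrix b b (Tl H x : Euc n →ₗ[ℝ] Euc n)
      = (1 + Matrix.replicateCol Unit a * Matrix.replicateRow Unit (fun i => x i)) * bmat n H x := by
    ext i j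
    have hs : bmat n H x i j = bmat n H x j i := by
      have := (G.pd x hx).1.apply i j
      simpa using this.symm
    rw [add_mul, one_mul, Matrix.mul_assoc, Matrix.add_apply]
    have e1 : (Matrix.replicateCol Unit a * (Matrix.replicateRow Unit (fun i => x i) * bmat n H x)) i j
        = a i * (H x * x j) := by
      simp [Matrix.mul_apply, hbx]
    rw [e1, hs]
    simp only [a, bmat, Matrix.add_apply, Matrix.of_apply, G.ehess_eq (ne0 hx)]
    rw [LinearMap.toMatrix_apply]
    simp [b, Tl, PiLp.inner_apply]
    field_simp
    ring
  have hdet : (Tl H x).det = (LinearMap.toMatrix b b (Tl H x : Euc n →ₗ[ℝ] Euc n)).det :=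
    (LinearMap.det_toMatrix b _).symm
  rw [hdet, hM, Matrix.det_mul, Matrix.det_one_add_replicateCol_mul_replicateRow, G.volDens_eq hx]
  have : (fun i => x i) ⬝ᵥ a = 0 := by
    simp only [dotProduct, a]
    have : ∀ i, x i * ((gradient H x i - H x * x i) / H x) = x i * gradient H x i / H x - x i * x i := by
      intro i; field_simp
    simp only [this, Finset.sum_sub_distrib, ← Finset.sum_div, hXx, hxx]
    simp [hh]
  rw [this]; ring

lemma hasT (G : Good n H) {y : Euc n} (hy : y ≠ 0) :
    HasFDerivAt (Tm H) (Tl H (‖y‖⁻¹ • y)) y := by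
  have hp := norm_pos_iff.2 hy
  have h1 : HasFDerivAt (fun z : Euc n => ‖z‖) (‖y‖⁻¹ • innerSL ℝ y) y := by
    have h3 := (hasStrictFDerivAt_norm_sq y).hasFDerivAt.sqrt (by positivity)
    simp only [Real.sqrt_sq (norm_nonneg _)] at h3
    refine h3.congr_fderiv ?_
    ext v; simp; field_simp
  refine (h1.smul (G.hasE hy)).congr_fderiv ?_
  ext1 v
  have e := G.E_hom hy (inv_pos.2 hp) v
  simp [← e, Tl, G.grad_hom hy (inv_pos.2 hp), smul_smul, hp.ne', inner_smul_left]

lemma T_smul (G : Good n H) {x : Euc n} (hx : x ∈ sphere (0 : Euc n) 1) {c : ℝ} (hc : 0 < c) :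
    Tm H (c • x) = c • gradient H x := by
  have h1 : ‖x‖ = 1 := by simpa using hx
  simp [Tm, G.grad_hom (ne0 hx) hc, norm_smul, h1, abs_of_pos hc]

lemma T_eq (G : Good n H) {y : Euc n} (hy : y ≠ 0) :
    Tm H y = ‖y‖ • gradient H (‖y‖⁻¹ • y) := by
  simp [Tm, G.grad_hom hy (inv_pos.2 (norm_pos_iff.2 hy))]

lemma T_inj (G : Good n H) : Set.InjOn (Tm H) {(0 : Euc n)}ᶜ := by
  intro y hy z hz h
  have hy0 : y ≠ 0 := hy
  have hz0 : z ≠ 0 := hz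
  have hyp := norm_pos_iff.2 hy0
  have hzp := norm_pos_iff.2 hz0
  rw [G.T_eq hy0, G.T_eq hz0] at h
  have hx := nrm_mem hy0
  have hξ := nrm_mem hz0
  have ey : y = ‖y‖ • ‖y‖⁻¹ • y := by rw [smul_smul, mul_inv_cancel₀ hyp.ne', one_smul]
  have ez : z = ‖z‖ • ‖z‖⁻¹ • z := by rw [smul_smul, mul_inv_cancel₀ hzp.ne', one_smul]
  set x := ‖y‖⁻¹ • y
  set ξ := ‖z‖⁻¹ • z
  have i1 := congrArg (fun v => ⟪v, x⟫) h
  have i2 := congrArg (fun v => ⟪v, ξ⟫) h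
  simp only [inner_smul_left, conj_trivial] at i1 i2
  rw [G.euler (ne0 hx)] at i1
  rw [G.euler (ne0 hξ)] at i2
  have px := G.pos x hx
  have pξ := G.pos ξ hξ
  by_cases hne : ξ = x
  · rw [hne, G.euler (ne0 hx)] at i1
    have : ‖y‖ = ‖z‖ := mul_right_cancel₀ px.ne' i1
    rw [ey, ez, this, hne]
  · have j1 := G.support_lt hx hξ hne
    have j2 := G.support_lt hξ hx (Ne.symm hne)
    have k1 : ‖y‖ * H x < ‖z‖ * H x := by rw [i1]; gcongr
    have k2 : ‖z‖ * H ξ < ‖y‖ * H ξ := by rw [← i2]; gcongr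
    have := lt_of_mul_lt_mul_right k1 px.le
    have := lt_of_mul_lt_mul_right k2 pξ.le
    linarith

lemma T_surj (G : Good n H) {y : Euc n} (hy : y ≠ 0)
    (hlt : ∀ ξ ∈ sphere (0 : Euc n) 1, ⟪ξ, y⟫ < H ξ) : y ∈ Tm H '' Us (fun _ => 1) := by
  have hyp := norm_pos_iff.2 hy
  have hcont : ContinuousOn H (sphere (0 : Euc n) 1) :=
    G.smooth.continuousOn.mono fun x hx => ne0 hx
  obtain ⟨x, hx, hmax⟩ := (isCompact_sphere (0 : Euc n) 1).exists_isMaxOn ⟨_, nrm_mem hy⟩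
    (f := fun ξ => ⟪ξ, y⟫ / H ξ)
    (ContinuousOn.div (by fun_prop) hcont fun ξ hξ => (G.pos ξ hξ).ne')
  set m := ⟪x, y⟫ / H x with hm
  have px := G.pos x hx
  have hm0 : 0 < m := by
    have h1 : ⟪‖y‖⁻¹ • y, y⟫ / H (‖y‖⁻¹ • y) ≤ m := hmax (nrm_mem hy)
    refine lt_of_lt_of_le ?_ h1
    refine div_pos ?_ (G.pos _ (nrm_mem hy))
    rw [inner_smul_left, real_inner_self_eq_norm_sq]; simp; positivity
  have hm1 : m < 1 := by rw [hm, div_lt_one px]; exact hlt x hx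
  have hmx : ⟪x, y⟫ = m * H x := by rw [hm]; field_simp
  have hloc : IsLocalMin (fun z => m * H z - ⟪y, z⟫) x := by
    filter_upwards [isOpen_compl_singleton.mem_nhds (ne0 hx)] with z hz
    have hz0 : z ≠ 0 := hz
    have hzp := norm_pos_iff.2 hz0
    rw [real_inner_comm, hmx, sub_self]
    have h1 : ⟪‖z‖⁻¹ • z, y⟫ / H (‖z‖⁻¹ • z) ≤ m := hmax (nrm_mem hz0)
    rw [div_le_iff₀ (G.pos _ (nrm_mem hz0)), inner_smul_left, G.hom _ (inv_pos.2 hzp),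
      real_inner_comm] at h1
    simp only [conj_trivial] at h1
    have : ‖z‖⁻¹ * ⟪y, z⟫ ≤ ‖z‖⁻¹ * (m * H z) := by linarith
    have := le_of_mul_le_mul_left this (inv_pos.2 hzp)
    linarith
  have hd : HasFDerivAt (fun z => m * H z - ⟪y, z⟫) (m • innerSL ℝ (gradient H x) - innerSL ℝ y) x :=
    ((G.hasFDeriv (ne0 hx)).const_mul m).sub (innerSL ℝ y).hasFDerivAt
  have h0 := hloc.hasFDerivAt_eq_zero hd
  have hyX : y = m • gradient H x := by
    refine (ext_inner_right ℝ fun v => ?_)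
    have := congrArg (fun L => L v) h0
    change m * ⟪gradient H x, v⟫ - ⟪y, v⟫ = 0 at this
    rw [inner_smul_left]; simp only [conj_trivial]; linarith
  have h1 : ‖x‖ = 1 := by simpa using hx
  refine ⟨m • x, ⟨smul_ne_zero hm0.ne' (ne0 hx), ?_⟩, ?_⟩
  · simpa [norm_smul, h1, abs_of_pos hm0] using hm1
  · rw [G.T_smul hx hm0, hyX]

lemma Us_open {s : Euc n → ℝ} (hs : ContinuousOn s (sphere (0 : Euc n) 1)) :
    IsOpen (Us s) := by
  have h1 : ContinuousOn (fun y : Euc n => ‖y‖⁻¹ • y) {(0 : Euc n)}ᶜ :=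
    ContinuousOn.smul (ContinuousOn.inv₀ (by fun_prop) fun y hy => norm_ne_zero_iff.2 hy) (by fun_prop)
  have h2 : ContinuousOn (fun y : Euc n => s (‖y‖⁻¹ • y) - ‖y‖) {(0 : Euc n)}ᶜ :=
    (hs.comp h1 fun y hy => nrm_mem hy).sub (by fun_prop)
  have h3 := h2.isOpen_inter_preimage isOpen_compl_singleton (isOpen_Ioi (a := (0:ℝ)))
  convert h3 using 1
  ext y; simp [Us]

lemma Us_meas {s : Euc n → ℝ} (hs : ContinuousOn s (sphere (0 : Euc n) 1)) :
    MeasurableSet (Us s) := (Us_open hs).measurableSet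

lemma T_meas (G : Good n H) {s : Euc n → ℝ} (hs : ContinuousOn s (sphere (0 : Euc n) 1)) :
    MeasurableSet (Tm H '' Us s) :=
  measurable_image_of_fderivWithin (Us_meas hs) (fun y hy => (G.hasT hy.1).hasFDerivWithinAt)
    (G.T_inj.mono fun y hy => hy.1)

lemma bm_app (G : Good n H) {s t g : Euc n → ℝ} (hs : ContinuousOn s (sphere (0 : Euc n) 1))
    (ht : ContinuousOn t (sphere (0 : Euc n) 1)) (hg : ∀ ξ ∈ sphere (0 : Euc n) 1, |g ξ| < 1)
    (h1 : ∀ x ∈ sphere (0 : Euc n) 1, ∀ ξ ∈ sphere (0 : Euc n) 1,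
      s x * ⟪gradient H x, ξ⟫ ≤ H ξ * (1 + g ξ))
    (h2 : ∀ x ∈ sphere (0 : Euc n) 1, ∀ ξ ∈ sphere (0 : Euc n) 1,
      t x * ⟪gradient H x, ξ⟫ ≤ H ξ * (1 - g ξ)) :
    volume (Tm H '' Us s) * volume (Tm H '' Us t) ≤ volume (Tm H '' Us (fun _ : Euc n => 1)) ^ 2 := by
  have hm1 := G.T_meas (s := fun _ => 1) continuousOn_const
  have key : ∀ (s : Euc n → ℝ) (k : Euc n → ℝ), (∀ ξ ∈ sphere (0 : Euc n) 1, 0 < k ξ) →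
      (∀ x ∈ sphere (0 : Euc n) 1, ∀ ξ ∈ sphere (0 : Euc n) 1,
      s x * ⟪gradient H x, ξ⟫ ≤ H ξ * k ξ) → ∀ y ∈ Tm H '' Us s, ∀ ξ ∈ sphere (0 : Euc n) 1,
      ⟪ξ, y⟫ < H ξ * k ξ := by
    rintro s k hk hsk _ ⟨u, ⟨hu0, hu⟩, rfl⟩ ξ hξ
    have hup := norm_pos_iff.2 hu0
    rw [G.T_eq hu0, inner_smul_right, real_inner_comm]
    have hp : 0 < H ξ * k ξ := mul_pos (G.pos ξ hξ) (hk ξ hξ)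
    rcases le_or_gt ⟪gradient H (‖u‖⁻¹ • u), ξ⟫ 0 with h | h
    · exact lt_of_le_of_lt (mul_nonpos_of_nonneg_of_nonpos hup.le h) hp
    · exact lt_of_lt_of_le (by gcongr) (hsk _ (nrm_mem hu0) ξ hξ)
  have hC : volume (Tm H '' Us (fun _ : Euc n => 1) ∪ {0}) = volume (Tm H '' Us (fun _ : Euc n => 1)) := by
    refine le_antisymm ((measure_union_le _ _).trans ?_) (measure_mono Set.subset_union_left)
    simp
  rw [← hC]
  refine bm_euc (G.T_meas hs) (G.T_meas ht) (hm1.union (measurableSet_singleton _)) ?_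
  intro y hy z hz
  by_cases h0 : (1/2 : ℝ) • (y + z) = 0
  · right; exact h0
  left
  refine G.T_surj h0 fun ξ hξ => ?_
  have b := abs_lt.1 (hg ξ hξ)
  have k1 := key s (fun ξ => 1 + g ξ) (fun ξ hξ => by linarith [(abs_lt.1 (hg ξ hξ)).1]) h1 y hy ξ hξ
  have k2 := key t (fun ξ => 1 - g ξ) (fun ξ hξ => by linarith [(abs_lt.1 (hg ξ hξ)).2]) h2 z hz ξ hξ
  rw [inner_smul_right, inner_add_right]
  linarith

end Good

end

section

namespace Good
variable {n : ℕ} {H : Euc n → ℝ}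

instance sphFinite (n : ℕ) : IsFiniteMeasure (sphMeasure n) := by unfold sphMeasure; infer_instance

instance sphOpenPos (n : ℕ) : (sphMeasure n).IsOpenPosMeasure := by unfold sphMeasure; infer_instance

instance sphNe (n : ℕ) : NeZero (sphMeasure n) := ⟨by unfold sphMeasure; simp⟩

lemma sph_int {F : Type*} [NormedAddCommGroup F] [NormedSpace ℝ F] [FiniteDimensional ℝ F]
    {f : sphere (0 : Euc n) 1 → F} (hf : Continuous f) :
    Integrable f (sphMeasure n) :=
  hf.integrable_of_hasCompactSupport (HasCompactSupport.of_compactSpace f)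

lemma E_contS (G : Good n H) : Continuous (fun x : sphere (0 : Euc n) 1 => Em H x) := by
  rw [continuous_iff_continuousAt]
  intro x
  exact (G.E_cont (ne0 x.2)).comp (f := Subtype.val) continuous_subtype_val.continuousAt

lemma H_contS (G : Good n H) : Continuous (fun x : sphere (0 : Euc n) 1 => H x) := by
  rw [continuous_iff_continuousAt]
  intro x
  exact (G.smoothAt (ne0 x.2)).continuousAt.comp (f := Subtype.val) continuous_subtype_val.continuousAt

lemma X_contS (G : Good n H) : Continuous (fun x : sphere (0 : Euc n) 1 => gradient H x) := by
  rw [continuous_iff_continuousAt]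
  intro x
  exact (G.gradSmoothAt (ne0 x.2)).continuousAt.comp (f := Subtype.val)
    continuous_subtype_val.continuousAt

lemma volDens_contS (G : Good n H) : Continuous (fun x : sphere (0 : Euc n) 1 => volDens n H x) := by
  have : (fun x : sphere (0 : Euc n) 1 => volDens n H x) = fun x => (bmat n H x.1).det := by
    ext x; exact G.volDens_eq x.2
  rw [this]
  refine Continuous.matrix_det (continuous_matrix fun i j => ?_)
  simp only [bmat, Matrix.add_apply, Matrix.of_apply, fun x : sphere (0 : Euc n) 1 => G.ehess_eq (ne0 x.2) i j]
  have h1 := G.E_contS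
  have h2 := G.H_contS
  have h3 : Continuous (fun x : sphere (0 : Euc n) 1 => Em H x (EuclideanSpace.single i 1)) :=
    h1.clm_apply continuous_const
  have h4 : Continuous (fun x : sphere (0 : Euc n) 1 => Em H x (EuclideanSpace.single i 1) j) := by
    fun_prop
  exact h4.add (h2.mul (by fun_prop))

lemma vol_T (G : Good n H) {s : Euc n → ℝ} (hs : ContinuousOn s (sphere (0 : Euc n) 1))
    (hp : ∀ x ∈ sphere (0 : Euc n) 1, 0 < s x) :
    volume (Tm H '' Us s) = ENNReal.ofReal
      ((∫ x : sphere (0 : Euc n) 1, volDens n H x * s x ^ (n+1) ∂(sphMeasure n)) / (n+1)) := by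
  have hsS : Continuous (fun x : sphere (0 : Euc n) 1 => s x) := continuousOn_iff_continuous_domRestrict.1 hs
  have hD := G.volDens_contS
  rw [← lintegral_abs_det_fderiv_eq_addHaar_image volume (Us_meas hs)
    (fun y hy => (G.hasT hy.1).hasFDerivWithinAt) (G.T_inj.mono fun y hy => hy.1)]
  classical
  let Φ : sphere (0 : Euc n) 1 × Set.Ioi (0:ℝ) → ENNReal := fun p =>
    if p.2.1 < s p.1 then ENNReal.ofReal (volDens n H p.1) else 0
  have hΦ : Measurable Φ := by
    refine Measurable.ite ?_ ?_ measurable_const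
    · exact measurableSet_lt (by fun_prop) (hsS.measurable.comp measurable_fst)
    · exact (hD.measurable.comp measurable_fst).ennreal_ofReal
  have e1 : ∫⁻ y in Us s, ENNReal.ofReal |(Tl H (‖y‖⁻¹ • y)).det|
      = ∫⁻ y : ({(0 : Euc n)}ᶜ : Set (Euc n)), Φ (homeomorphUnitSphereProd (Euc n) y)
          ∂((volume : Measure (Euc n)).comap Subtype.val) := by
    rw [← lintegral_indicator (Us_meas hs)]
    have : ∀ y : ({(0 : Euc n)}ᶜ : Set (Euc n)), Φ (homeomorphUnitSphereProd (Euc n) y) =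
      (Us s).indicator (fun y => ENNReal.ofReal |(Tl H (‖y‖⁻¹ • y)).det|) y := by
      rintro ⟨y, hy⟩
      have hy0 : y ≠ 0 := hy
      simp only [Φ, homeomorphUnitSphereProd_apply_fst_coe, homeomorphUnitSphereProd_apply_snd_coe,
        Set.indicator, Us, Set.mem_ofPred_eq, hy0, ne_eq, not_false_eq_true, true_and]
      rw [G.det_Tl (nrm_mem hy0), abs_of_pos (G.volDens_pos (nrm_mem hy0))]
    simp_rw [this]
    rw [lintegral_subtype_comap (measurableSet_singleton _).compl, restrict_compl_singleton]
  rw [e1]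
  have mp := (volume : Measure (Euc n)).measurePreserving_homeomorphUnitSphereProd
  rw [mp.lintegral_comp hΦ, lintegral_prod _ hΦ.aemeasurable]
  have hdim : Module.finrank ℝ (Euc n) - 1 = n := by simp
  rw [hdim]
  have e2 : ∀ x : sphere (0 : Euc n) 1, ∫⁻ r, Φ (x, r) ∂(Measure.volumeIoiPow n) =
      ENNReal.ofReal (volDens n H x * s x ^ (n+1) / (n+1)) := by
    intro x
    have : (fun r => Φ (x, r)) = (Set.Iio (⟨s x, hp x x.2⟩ : Set.Ioi (0:ℝ))).indicator
        (fun _ => ENNReal.ofReal (volDens n H x)) := by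
      ext r; simp [Φ, Set.indicator, ← Subtype.coe_lt_coe]
    rw [this, lintegral_indicator measurableSet_Iio, lintegral_const, Measure.restrict_apply_univ,
      Measure.volumeIoiPow_apply_Iio, ← ENNReal.ofReal_mul (G.volDens_pos x.2).le, mul_div_assoc]
  simp_rw [e2]
  rw [← integral_div, ofReal_integral_eq_lintegral_ofReal]
  · rfl
  · exact sph_int ((hD.mul (hsS.pow _)).div_const _)
  · refine Filter.Eventually.of_forall fun x => ?_
    have := G.volDens_pos x.2
    have := hp x x.2
    simp only [Pi.zero_apply]
    positivity

lemma bm_int (G : Good n H) {s t g : Euc n → ℝ} (hs : ContinuousOn s (sphere (0 : Euc n) 1))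
    (ht : ContinuousOn t (sphere (0 : Euc n) 1)) (hg : ∀ ξ ∈ sphere (0 : Euc n) 1, |g ξ| < 1)
    (hsp : ∀ x ∈ sphere (0 : Euc n) 1, 0 < s x) (htp : ∀ x ∈ sphere (0 : Euc n) 1, 0 < t x)
    (h1 : ∀ x ∈ sphere (0 : Euc n) 1, ∀ ξ ∈ sphere (0 : Euc n) 1,
      s x * ⟪gradient H x, ξ⟫ ≤ H ξ * (1 + g ξ))
    (h2 : ∀ x ∈ sphere (0 : Euc n) 1, ∀ ξ ∈ sphere (0 : Euc n) 1,
      t x * ⟪gradient H x, ξ⟫ ≤ H ξ * (1 - g ξ)) :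
    (∫ x : sphere (0 : Euc n) 1, volDens n H x * s x ^ (n+1) ∂(sphMeasure n)) *
    (∫ x : sphere (0 : Euc n) 1, volDens n H x * t x ^ (n+1) ∂(sphMeasure n)) ≤
    (∫ x : sphere (0 : Euc n) 1, volDens n H x ∂(sphMeasure n)) ^ 2 := by
  have h := G.bm_app hs ht hg h1 h2
  rw [G.vol_T hs hsp, G.vol_T ht htp, G.vol_T (s := fun _ => 1) continuousOn_const (by simp)] at h
  have nn : ∀ s : Euc n → ℝ, (∀ x ∈ sphere (0 : Euc n) 1, 0 < s x) →
      0 ≤ ∫ x : sphere (0 : Euc n) 1, volDens n H x * s x ^ (n+1) ∂(sphMeasure n) := by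
    intro s hs
    refine integral_nonneg fun x => ?_
    have := G.volDens_pos x.2
    have := hs x x.2
    simp only [Pi.zero_apply]
    positivity
  have n1 := nn s hsp
  have n2 := nn t htp
  have n3 := nn (fun _ => 1) (by simp)
  simp only [one_pow, mul_one] at h n3
  rw [← ENNReal.ofReal_mul (by positivity), ← ENNReal.ofReal_pow (by positivity),
    ENNReal.ofReal_le_ofReal_iff (by positivity)] at h
  have hn : (0:ℝ) < n + 1 := by positivity
  rw [div_mul_div_comm, div_pow, ← sq, div_le_div_iff_of_pos_right (by positivity)] at h
  exact h

end Good

end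

section

lemma pow_expand (M : ℝ) (hM : 0 ≤ M) (N : ℕ) : ∃ C, 0 ≤ C ∧ ∀ f Q ε : ℝ, |f| ≤ M → |Q| ≤ M → |ε| ≤ 1 →
    |(1 + (ε * f - ε^2 * Q)) ^ N - (1 + N * (ε * f - ε^2 * Q) + N * (N - 1) / 2 * (ε^2 * f^2))|
      ≤ C * |ε| ^ 3 := by
  induction N with
  | zero => exact ⟨0, le_rfl, fun f Q ε _ _ _ => by simp⟩
  | succ N ih =>
    obtain ⟨C, hC, ih⟩ := ih
    have hc : (0:ℝ) ≤ N * (N - 1) / 2 := by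
      rcases N with _ | N
      · simp
      · push_cast; simp; positivity
    set c : ℝ := N * (N - 1) / 2 with hcdef
    refine ⟨(1 + 2 * M) * C + 3 * N * M^2 + 2 * c * M^3, by positivity, fun f Q ε hf hQ hε => ?_⟩
    have h := ih f Q ε hf hQ hε
    set t := ε * f - ε^2 * Q with ht
    have htb : |t| ≤ 2 * M * |ε| := by
      have h1 : |t| ≤ |ε * f| + |ε^2 * Q| := abs_sub _ _
      rw [abs_mul, abs_mul, abs_pow] at h1
      have : |ε| ^ 2 ≤ |ε| := by nlinarith [abs_nonneg ε]
      nlinarith [mul_le_mul_of_nonneg_left hf (abs_nonneg ε),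
        mul_le_mul this hQ (abs_nonneg _) (abs_nonneg _)]
    set R := (1 + t) ^ N - (1 + N * t + c * (ε^2 * f^2)) with hR
    have e : (1 + t) ^ (N+1) - (1 + ((N+1 : ℕ):ℝ) * t + ((N+1 : ℕ):ℝ) * (((N+1 : ℕ):ℝ) - 1) / 2 * (ε^2 * f^2))
        = (1 + t) * R + (- (2 * N * (f * Q) * ε^3) + (N * Q^2 * ε * ε^3 + c * t * (ε^2 * f^2))) := by
      have : (1 + t) ^ (N+1) = (1 + t) * (R + (1 + N * t + c * (ε^2 * f^2))) := by
        rw [hR]; ring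
      rw [this, hcdef]; push_cast; rw [ht]; ring
    rw [e]
    have a0 := abs_nonneg ε
    have b1 : |(1 + t) * R| ≤ (1 + 2 * M) * (C * |ε|^3) := by
      rw [abs_mul]
      have : |1 + t| ≤ 1 + 2 * M := by
        refine (abs_add_le _ _).trans ?_
        rw [abs_one]
        nlinarith
      gcongr
    have b2 : |-(2 * N * (f * Q) * ε^3)| ≤ 2 * N * (M * M) * |ε|^3 := by
      rw [abs_neg, abs_mul, abs_mul, abs_mul f Q, abs_pow, abs_of_nonneg (by positivity : (0:ℝ) ≤ 2 * N)]
      gcongr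
    have b3 : |N * Q^2 * ε * ε^3| ≤ N * M^2 * 1 * |ε|^3 := by
      rw [abs_mul, abs_mul, abs_mul, abs_pow, abs_pow, Nat.abs_cast]
      gcongr
    have b4 : |c * t * (ε^2 * f^2)| ≤ c * (2 * M * |ε|) * (|ε|^2 * M^2) := by
      rw [abs_mul, abs_mul, abs_mul, abs_pow, abs_pow, abs_of_nonneg hc]
      gcongr
    have s1 := abs_add_le ((1 + t) * R) (- (2 * N * (f * Q) * ε^3) + (N * Q^2 * ε * ε^3 + c * t * (ε^2 * f^2)))
    have s2 := abs_add_le (- (2 * N * (f * Q) * ε^3)) (N * Q^2 * ε * ε^3 + c * t * (ε^2 * f^2))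
    have s3 := abs_add_le (N * Q^2 * ε * ε^3) (c * t * (ε^2 * f^2))
    nlinarith

section
open scoped Topology

namespace Good
variable {n : ℕ} {H : Euc n → ℝ}

/-- the quadratic correction -/
def Qf (H : Euc n → ℝ) (w : Euc n → Euc n) (l δ : ℝ) (x : Euc n) : ℝ :=
  H x * ⟪Em H x (w x), w x⟫ / (2 * l) + δ

lemma Qf_cont (G : Good n H) {w : Euc n → Euc n} (hw : ContinuousOn w (sphere (0 : Euc n) 1)) (l δ : ℝ) :
    Continuous (fun x : sphere (0 : Euc n) 1 => Qf H w l δ x) := by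
  have hwS : Continuous (fun x : sphere (0 : Euc n) 1 => w x) := continuousOn_iff_continuous_domRestrict.1 hw
  have := G.E_contS.clm_apply hwS
  exact ((G.H_contS.mul (this.inner hwS)).div_const _).add continuous_const

lemma local_ineq (G : Good n H) {f : Euc n → ℝ} {w : Euc n → Euc n}
    (hf : ∀ x ∈ sphere (0 : Euc n) 1, HasStrictFDerivAt f ((innerSL ℝ (w x)).comp (Em H x)) x)
    (hw : ContinuousOn w (sphere (0 : Euc n) 1)) {l δ : ℝ} (hl0 : 0 < l) (hl1 : l < 1) (hδ : 0 < δ)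
    (x0 ξ0 : sphere (0 : Euc n) 1) :
    ∀ᶠ z : ℝ × (sphere (0 : Euc n) 1 × sphere (0 : Euc n) 1) in 𝓝 (0, (x0, ξ0)), 0 < z.1 →
      (1 + (z.1 * f z.2.1 - z.1 ^ 2 * Qf H w l δ z.2.1)) * ⟪gradient H z.2.1, z.2.2⟫
        ≤ H z.2.2 * (1 + z.1 * f z.2.2) := by
  have hfS : Continuous (fun x : sphere (0 : Euc n) 1 => f x) := by
    rw [continuous_iff_continuousAt]
    intro x
    exact (hf x x.2).continuousAt.comp (f := Subtype.val) continuous_subtype_val.continuousAt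
  have hQ := G.Qf_cont hw l δ
  have hH := G.H_contS
  have hX := G.X_contS
  have c1 : Continuous (fun z : ℝ × (sphere (0 : Euc n) 1 × sphere (0 : Euc n) 1) => f z.2.1) :=
    hfS.comp (continuous_fst.comp continuous_snd)
  have c2 : Continuous (fun z : ℝ × (sphere (0 : Euc n) 1 × sphere (0 : Euc n) 1) => f z.2.2) :=
    hfS.comp (continuous_snd.comp continuous_snd)
  have c3 : Continuous (fun z : ℝ × (sphere (0 : Euc n) 1 × sphere (0 : Euc n) 1) => Qf H w l δ z.2.1) :=
    hQ.comp (continuous_fst.comp continuous_snd)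
  have c4 : Continuous (fun z : ℝ × (sphere (0 : Euc n) 1 × sphere (0 : Euc n) 1) => H z.2.2) :=
    hH.comp (continuous_snd.comp continuous_snd)
  have c5 : Continuous (fun z : ℝ × (sphere (0 : Euc n) 1 × sphere (0 : Euc n) 1) => gradient H z.2.1) :=
    hX.comp (continuous_fst.comp continuous_snd)
  have c6 : Continuous (fun z : ℝ × (sphere (0 : Euc n) 1 × sphere (0 : Euc n) 1) =>
      1 + (z.1 * f z.2.1 - z.1 ^ 2 * Qf H w l δ z.2.1)) :=
    continuous_const.add ((continuous_fst.mul c1).sub ((continuous_fst.pow 2).mul c3))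
  by_cases hne : ξ0 = x0
  swap
  · have hlt := G.support_lt x0.2 ξ0.2 (fun h => hne (Subtype.ext h))
    have cL := c6.mul (c5.inner (continuous_subtype_val.comp (continuous_snd.comp continuous_snd)))
    have cR : Continuous (fun z : ℝ × (sphere (0 : Euc n) 1 × sphere (0 : Euc n) 1) =>
      H z.2.2 * (1 + z.1 * f z.2.2)) := c4.mul (continuous_const.add (continuous_fst.mul c2))
    have := cL.continuousAt.eventually_lt cR.continuousAt (x₀ := (0, (x0, ξ0))) (by
      change (1 + ((0:ℝ) * f x0 - 0 ^ 2 * Qf H w l δ x0)) * ⟪gradient H x0, (ξ0 : Euc n)⟫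
        < H ξ0 * (1 + 0 * f ξ0)
      rw [zero_mul, zero_mul, zero_pow two_ne_zero, zero_mul, sub_self, add_zero, one_mul, mul_one]
      exact hlt)
    filter_upwards [this] with z hz _ using hz.le
  subst hne
  obtain ⟨c, hc, hlow⟩ := G.lower ξ0.2
  set h0 := H ξ0 with hh0
  have hp0 : 0 < h0 := G.pos ξ0 ξ0.2
  obtain ⟨η, hη, hη1, hη2⟩ : ∃ η > 0, η < δ ∧ h0 * (l / h0 / 2 + η / c) < 1 / 2 * (1 - 2 * η / c) := by
    refine ⟨min (δ / 2) ((1 - l) * c / (4 * (h0 + 1))), lt_min (by positivity)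
      (div_pos (mul_pos (by linarith) hc) (by positivity)), lt_of_le_of_lt (min_le_left _ _) (by linarith), ?_⟩
    set η := min (δ / 2) ((1 - l) * c / (4 * (h0 + 1)))
    have : η ≤ (1 - l) * c / (4 * (h0 + 1)) := min_le_right _ _
    rw [le_div_iff₀ (by positivity)] at this
    have e : h0 * (l / h0 / 2 + η / c) = l / 2 + h0 * (η / c) := by field_simp
    have e2 : η / c * (4 * (h0 + 1)) ≤ 1 - l := by
      rw [div_mul_eq_mul_div, div_le_iff₀ hc]; exact this
    have e3 : 2 * η / c = 2 * (η / c) := by ring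
    rw [e, e3]
    nlinarith
  have tpr : Filter.Tendsto (fun z : ℝ × (sphere (0 : Euc n) 1 × sphere (0 : Euc n) 1) =>
      ((z.2.1 : Euc n), (z.2.2 : Euc n))) (𝓝 (0, (ξ0, ξ0))) (𝓝 ((ξ0 : Euc n), (ξ0 : Euc n))) := by
    have : Continuous (fun z : ℝ × (sphere (0 : Euc n) 1 × sphere (0 : Euc n) 1) =>
      ((z.2.1 : Euc n), (z.2.2 : Euc n))) := by fun_prop
    exact this.tendsto (0, (ξ0, ξ0))
  have tpr' : Filter.Tendsto (fun z : ℝ × (sphere (0 : Euc n) 1 × sphere (0 : Euc n) 1) =>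
      ((z.2.2 : Euc n), (z.2.1 : Euc n))) (𝓝 (0, (ξ0, ξ0))) (𝓝 ((ξ0 : Euc n), (ξ0 : Euc n))) := by
    have : Continuous (fun z : ℝ × (sphere (0 : Euc n) 1 × sphere (0 : Euc n) 1) =>
      ((z.2.2 : Euc n), (z.2.1 : Euc n))) := by fun_prop
    exact this.tendsto (0, (ξ0, ξ0))
  have ev1 := tpr.eventually (hlow η hη)
  have ev2 := tpr'.eventually ((hasStrictFDerivAt_iff_isLittleO.1 (hf ξ0 ξ0.2)).def hη)
  have k1 : Continuous (fun z : ℝ × (sphere (0 : Euc n) 1 × sphere (0 : Euc n) 1) =>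
      H z.2.2 * (l / h0 / 2 + η / c)) := c4.mul continuous_const
  have k2 : Continuous (fun z : ℝ × (sphere (0 : Euc n) 1 × sphere (0 : Euc n) 1) =>
      (1 + (z.1 * f z.2.1 - z.1 ^ 2 * Qf H w l δ z.2.1)) / 2 * (1 - 2 * η / c)) :=
    (c6.div_const 2).mul continuous_const
  have ev3 := k1.continuousAt.eventually_lt k2.continuousAt (x₀ := (0, (ξ0, ξ0))) (by
      rw [zero_mul, zero_pow two_ne_zero, zero_mul, sub_self, add_zero]
      exact hη2)
  have ev4 := (c3.tendsto (0, (ξ0, ξ0))).eventually (lt_mem_nhds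
    (show Qf H w l δ ξ0 - δ + η < Qf H w l δ ξ0 by linarith))
  have ev5 := (c6.tendsto (0, (ξ0, ξ0))).eventually (lt_mem_nhds
    (show 0 < 1 + ((0:ℝ) * f ξ0 - 0 ^ 2 * Qf H w l δ ξ0) by simp))
  filter_upwards [ev1, ev2, ev3, ev4, ev5] with z h1 h2 h3 h4 h5 hε
  obtain ⟨ε, x, ξ⟩ := z
  simp only at h1 h2 h3 h4 h5 hε ⊢
  obtain ⟨h1a, h1b⟩ := h1 x.2 ξ.2
  set d : Euc n := ξ.1 - x.1 with hd
  set e := ⟪Em H ξ0 d, d⟫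
  have hHξ := G.pos ξ ξ.2
  -- linear estimate
  have l1 : f x - f ξ ≤ ⟪-w ξ0, Em H ξ0 d⟫ + η * ‖d‖ := by
    have := (abs_le.1 h2).1
    change -(η * ‖d‖) ≤ f ξ - f x - ⟪w ξ0, Em H ξ0 d⟫ at this
    rw [inner_neg_left]
    linarith
  have l2 := G.E_young ξ0.2 (-w ξ0) d (a := l / h0 / ε) (by positivity)
  have l3 : ⟪Em H ξ0 (-w ξ0), -w ξ0⟫ = ⟪Em H ξ0 (w ξ0), w ξ0⟫ := by
    rw [map_neg, inner_neg_left, inner_neg_right, neg_neg]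
  rw [l3] at l2
  set g := ⟪Em H ξ0 (w ξ0), w ξ0⟫
  have l4 : Qf H w l δ ξ0 - δ = h0 * g / (2 * l) := by simp only [Qf]; ring
  rw [l4] at h4
  have l5 : ε * (f x - f ξ) ≤ l / h0 / 2 * e + ε ^ 2 * (h0 * g / (2 * l)) + (η * ε ^ 2 + η / c * e) := by
    have m1 : ε * (f x - f ξ) ≤ ε * (l / h0 / ε / 2 * e + 1 / (2 * (l / h0 / ε)) * g + η * ‖d‖) :=
      mul_le_mul_of_nonneg_left (by linarith) hε.le
    have m2 : ε * (l / h0 / ε / 2 * e + 1 / (2 * (l / h0 / ε)) * g + η * ‖d‖)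
      = l / h0 / 2 * e + ε ^ 2 * (h0 * g / (2 * l)) + η * (ε * ‖d‖) := by field_simp
    have m3 : ε * ‖d‖ ≤ ε ^ 2 + ‖d‖ ^ 2 := by nlinarith [sq_nonneg (ε - ‖d‖), norm_nonneg d]
    have m4 : ‖d‖ ^ 2 ≤ e / c := by rw [le_div_iff₀ hc]; linarith
    have m5 : η * (ε * ‖d‖) ≤ η * (ε ^ 2 + e / c) := mul_le_mul_of_nonneg_left (by linarith) hη.le
    have m6 : η * (ε ^ 2 + e / c) = η * ε ^ 2 + η / c * e := by ring
    linarith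
  have he : 0 ≤ e := le_trans (by positivity) h1a
  set s := 1 + (ε * f x - ε ^ 2 * Qf H w l δ x) with hs
  have l6 : 1 / 2 * e * (1 - 2 * η / c) ≤ H ξ - ⟪gradient H x, ξ⟫ := by
    have m4 : ‖d‖ ^ 2 ≤ e / c := by rw [le_div_iff₀ hc]; linarith
    have : η * ‖d‖ ^ 2 ≤ η * (e / c) := mul_le_mul_of_nonneg_left m4 hη.le
    have m6 : 1 / 2 * e * (1 - 2 * η / c) = 1 / 2 * e - η * (e / c) := by ring
    linarith
  have l7 := mul_le_mul_of_nonneg_left l6 h5.le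
  have l8 := mul_le_mul_of_nonneg_left l5 hHξ.le
  have l9 := mul_le_mul_of_nonneg_right h3.le he
  have l10 : H ξ * (ε ^ 2 * (h0 * g / (2 * l) + η)) ≤ H ξ * (ε ^ 2 * Qf H w l δ x) := by gcongr
  have l11 : H ξ * (1 + ε * f ξ) - s * ⟪gradient H x, ξ⟫ =
    s * (H ξ - ⟪gradient H x, ξ⟫) + H ξ * (ε ^ 2 * Qf H w l δ x) - H ξ * (ε * (f x - f ξ)) := by
    rw [hs]; ring
  have : 0 ≤ H ξ * (1 + ε * f ξ) - s * ⟪gradient H x, ξ⟫ := by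
    rw [l11]
    linarith
  linarith

end Good
end

end

section

section
open scoped Topology

namespace Good
variable {n : ℕ} {H : Euc n → ℝ}

lemma global_ineq (G : Good n H) {f : Euc n → ℝ} {w : Euc n → Euc n}
    (hf : ∀ x ∈ sphere (0 : Euc n) 1, HasStrictFDerivAt f ((innerSL ℝ (w x)).comp (Em H x)) x)
    (hw : ContinuousOn w (sphere (0 : Euc n) 1)) {l δ : ℝ} (hl0 : 0 < l) (hl1 : l < 1) (hδ : 0 < δ) :
    ∀ᶠ ε : ℝ in 𝓝[>] 0, ∀ x ∈ sphere (0 : Euc n) 1, ∀ ξ ∈ sphere (0 : Euc n) 1,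
      (1 + (ε * f x - ε ^ 2 * Qf H w l δ x)) * ⟪gradient H x, ξ⟫ ≤ H ξ * (1 + ε * f ξ) := by
  have := (isCompact_univ (X := sphere (0 : Euc n) 1 × sphere (0 : Euc n) 1)).eventually_forall_of_forall_eventually
    (x₀ := (0:ℝ)) (P := fun (ε : ℝ) (z : sphere (0 : Euc n) 1 × sphere (0 : Euc n) 1) => 0 < ε →
      (1 + (ε * f z.1 - ε ^ 2 * Qf H w l δ z.1)) * ⟪gradient H z.1, z.2⟫
        ≤ H z.2 * (1 + ε * f z.2)) (fun z _ => G.local_ineq hf hw hl0 hl1 hδ z.1 z.2)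
  filter_upwards [this.filter_mono nhdsWithin_le_nhds, self_mem_nhdsWithin] with ε h hε x hx ξ hξ
  exact h (⟨x, hx⟩, ⟨ξ, hξ⟩) (Set.mem_univ _) hε

lemma local_bm_aux (G : Good n H) {f : Euc n → ℝ} {w : Euc n → Euc n}
    (hf : ∀ x ∈ sphere (0 : Euc n) 1, HasStrictFDerivAt f ((innerSL ℝ (w x)).comp (Em H x)) x)
    (hw : ContinuousOn w (sphere (0 : Euc n) 1))
    (h0 : ∫ x : sphere (0 : Euc n) 1, volDens n H x * f x ∂(sphMeasure n) = 0)
    {l δ : ℝ} (hl0 : 0 < l) (hl1 : l < 1) (hδ : 0 < δ) :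
    n * ∫ x : sphere (0 : Euc n) 1, volDens n H x * f x ^ 2 ∂(sphMeasure n) ≤
      2 * ∫ x : sphere (0 : Euc n) 1, volDens n H x * Qf H w l δ x ∂(sphMeasure n) := by
  by_contra! hcon
  have hfS : Continuous (fun x : sphere (0 : Euc n) 1 => f x) := by
    rw [continuous_iff_continuousAt]
    intro x
    exact (hf x x.2).continuousAt.comp (f := Subtype.val) continuous_subtype_val.continuousAt
  have hQ := G.Qf_cont hw l δ
  have hD := G.volDens_contS
  have hfO : ContinuousOn f (sphere (0 : Euc n) 1) := continuousOn_iff_continuous_domRestrict.2 hfS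
  have hQO : ContinuousOn (Qf H w l δ) (sphere (0 : Euc n) 1) :=
    continuousOn_iff_continuous_domRestrict.2 hQ
  obtain ⟨M1, hM1⟩ := (isCompact_sphere (0 : Euc n) 1).exists_bound_of_continuousOn hfO
  obtain ⟨M2, hM2⟩ := (isCompact_sphere (0 : Euc n) 1).exists_bound_of_continuousOn hQO
  set M := max (max M1 M2) 1 with hM
  have hMf : ∀ x ∈ sphere (0 : Euc n) 1, |f x| ≤ M := fun x hx =>
    (hM1 x hx).trans ((le_max_left _ _).trans (le_max_left _ _))
  have hMQ : ∀ x ∈ sphere (0 : Euc n) 1, |Qf H w l δ x| ≤ M := fun x hx =>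
    (hM2 x hx).trans ((le_max_right _ _).trans (le_max_left _ _))
  have hM0 : 1 ≤ M := le_max_right _ _
  obtain ⟨C, hC, hexp⟩ := pow_expand M (by linarith) (n+1)
  set μ := sphMeasure n
  set a0 := ∫ x : sphere (0 : Euc n) 1, volDens n H x ∂μ with ha0
  set If := ∫ x : sphere (0 : Euc n) 1, volDens n H x * f x ^ 2 ∂μ with hIf
  set IQ := ∫ x : sphere (0 : Euc n) 1, volDens n H x * Qf H w l δ x ∂μ with hIQ
  have ha0n : 0 ≤ a0 := integral_nonneg fun x => (G.volDens_pos x.2).le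
  set L := ((n:ℝ) + 1) / 2 * (n * If - 2 * IQ) with hL
  have hLpos : 0 < L := mul_pos (by positivity) (by linarith)
  have hwn : ContinuousOn (fun x => - w x) (sphere (0 : Euc n) 1) := hw.neg
  have hfn : ∀ x ∈ sphere (0 : Euc n) 1,
      HasStrictFDerivAt (fun x => - f x) ((innerSL ℝ (- w x)).comp (Em H x)) x := by
    intro x hx
    refine (hf x hx).neg.congr_fderiv ?_
    ext v; simp
  have hQn : Qf H (fun x => - w x) l δ = Qf H w l δ := by
    ext x; simp [Qf]
  have ev1 := G.global_ineq hf hw hl0 hl1 hδ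
  have ev2 := G.global_ineq hfn hwn hl0 hl1 hδ
  rw [hQn] at ev2
  have ev3 : ∀ᶠ ε : ℝ in 𝓝[>] 0, ε < min (1 / (4 * M)) (L / (C * a0 + 1)) := by
    refine Filter.Eventually.filter_mono nhdsWithin_le_nhds (gt_mem_nhds ?_)
    exact lt_min (by positivity) (by positivity)
  have ev4 : ∀ᶠ ε : ℝ in 𝓝[>] 0, 0 < ε := self_mem_nhdsWithin
  obtain ⟨ε, ⟨⟨e1, e2⟩, e3⟩, e4⟩ := (((ev1.and ev2).and ev3).and ev4).exists
  have e5 : ε * (4 * M) < 1 := by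
    rw [← lt_div_iff₀ (by positivity)]; exact lt_of_lt_of_le e3 (min_le_left _ _)
  have e6 : ε * (C * a0 + 1) < L := by
    rw [← lt_div_iff₀ (by positivity)]; exact lt_of_lt_of_le e3 (min_le_right _ _)
  have e7 : ε ≤ 1 := by nlinarith
  have bf : ∀ x ∈ sphere (0 : Euc n) 1, |ε * f x| ≤ 1 / 4 := by
    intro x hx
    rw [abs_mul, abs_of_pos e4]
    nlinarith [hMf x hx]
  have bQ : ∀ x ∈ sphere (0 : Euc n) 1, |ε ^ 2 * Qf H w l δ x| ≤ 1 / 4 := by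
    intro x hx
    rw [abs_mul, abs_of_pos (by positivity)]
    have : ε ^ 2 ≤ ε := by nlinarith
    have := mul_le_mul this (hMQ x hx) (abs_nonneg _) e4.le
    linarith
  -- lower bound for the volumes
  have key : ∀ g : Euc n → ℝ, Continuous (fun x : sphere (0 : Euc n) 1 => g x) →
      (∀ x ∈ sphere (0 : Euc n) 1, |g x| ≤ M) → (∀ x ∈ sphere (0 : Euc n) 1, g x ^ 2 = f x ^ 2) →
      (∫ x : sphere (0 : Euc n) 1, volDens n H x * g x ∂μ = 0) →
      a0 < ∫ x : sphere (0 : Euc n) 1,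
        volDens n H x * (1 + (ε * g x - ε ^ 2 * Qf H w l δ x)) ^ (n+1) ∂μ := by
    intro g hg hgM hgf hg0
    have i1 : Integrable (fun x : sphere (0 : Euc n) 1 => volDens n H x) μ := sph_int hD
    have i2 : Integrable (fun x : sphere (0 : Euc n) 1 => volDens n H x * g x) μ := sph_int (hD.mul hg)
    have i3 : Integrable (fun x : sphere (0 : Euc n) 1 => volDens n H x * Qf H w l δ x) μ :=
      sph_int (hD.mul hQ)
    have i4 : Integrable (fun x : sphere (0 : Euc n) 1 => volDens n H x * f x ^ 2) μ :=
      sph_int (hD.mul (hfS.pow 2))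
    have i5 : Integrable (fun x : sphere (0 : Euc n) 1 =>
      volDens n H x * (1 + (ε * g x - ε ^ 2 * Qf H w l δ x)) ^ (n+1)) μ :=
      sph_int (hD.mul ((continuous_const.add ((continuous_const.mul hg).sub
        (continuous_const.mul hQ))).pow _))
    have lb : ∀ x : sphere (0 : Euc n) 1,
        (1 - C * ε ^ 3) * volDens n H x + ((n + 1) * ε) * (volDens n H x * g x)
          - ((n + 1) * ε ^ 2) * (volDens n H x * Qf H w l δ x)
          + ((n + 1) * n / 2 * ε ^ 2) * (volDens n H x * f x ^ 2) ≤
        volDens n H x * (1 + (ε * g x - ε ^ 2 * Qf H w l δ x)) ^ (n+1) := by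
      intro x
      have hx := hexp (g x) (Qf H w l δ x) ε (hgM x x.2) (hMQ x x.2) (by rw [abs_of_pos e4]; exact e7)
      have hx := (abs_le.1 hx).1
      rw [abs_of_pos e4, hgf x x.2] at hx
      push_cast at hx
      have := mul_le_mul_of_nonneg_left hx (G.volDens_pos x.2).le
      have e : (n:ℝ) + 1 - 1 = n := by ring
      rw [e] at this
      linarith
    have := integral_mono (((i1.const_mul (1 - C * ε ^ 3)).add (i2.const_mul ((n + 1) * ε))).sub
      (i3.const_mul ((n + 1) * ε ^ 2)) |>.add (i4.const_mul ((n + 1) * n / 2 * ε ^ 2))) i5 lb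
    have j1 := i1.const_mul (1 - C * ε ^ 3)
    have j2 := i2.const_mul ((n + 1) * ε)
    have j3 := i3.const_mul ((n + 1) * ε ^ 2)
    have j4 := i4.const_mul ((n + 1) * n / 2 * ε ^ 2)
    have comp : ∫ x : sphere (0 : Euc n) 1, ((1 - C * ε ^ 3) * volDens n H x + ((n + 1) * ε) * (volDens n H x * g x)
          - ((n + 1) * ε ^ 2) * (volDens n H x * Qf H w l δ x)
          + ((n + 1) * n / 2 * ε ^ 2) * (volDens n H x * f x ^ 2)) ∂μ =
        (1 - C * ε ^ 3) * a0 + ((n + 1) * ε) * 0 - ((n + 1) * ε ^ 2) * IQ + ((n + 1) * n / 2 * ε ^ 2) * If := by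
      refine (integral_add' ((j1.add j2).sub j3) j4).trans ?_
      rw [integral_sub' (j1.add j2) j3, integral_add' j1 j2,
        integral_const_mul, integral_const_mul, integral_const_mul, integral_const_mul, hg0]
    refine lt_of_lt_of_le ?_ (comp.symm.le.trans this)
    have : (1 - C * ε ^ 3) * a0 + ((n + 1) * ε) * 0 - ((n + 1) * ε ^ 2) * IQ + ((n + 1) * n / 2 * ε ^ 2) * If
      = a0 + ε ^ 2 * (L - ε * (C * a0)) := by rw [hL]; ring
    rw [this]
    have : 0 < ε ^ 2 * (L - ε * (C * a0)) := mul_pos (by positivity) (by linarith)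
    linarith
  have K1 := key f hfS hMf (fun _ _ => rfl) h0
  have K2 := key (fun x => - f x) hfS.neg (fun x hx => by rw [abs_neg]; exact hMf x hx)
    (fun _ _ => by ring) (by simp only [mul_neg]; rw [integral_neg, h0, neg_zero])
  have BM := G.bm_int (s := fun x => 1 + (ε * f x - ε ^ 2 * Qf H w l δ x))
    (t := fun x => 1 + (ε * (- f x) - ε ^ 2 * Qf H w l δ x)) (g := fun x => ε * f x)
    (continuousOn_const.add ((continuousOn_const.mul hfO).sub (continuousOn_const.mul hQO)))
    (continuousOn_const.add ((continuousOn_const.mul hfO.neg).sub (continuousOn_const.mul hQO)))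
    (fun ξ hξ => lt_of_le_of_lt (bf ξ hξ) (by norm_num))
    (fun x hx => by
      have := abs_le.1 (bf x hx); have := abs_le.1 (bQ x hx); linarith)
    (fun x hx => by
      have := abs_le.1 (bf x hx); have := abs_le.1 (bQ x hx); linarith)
    e1 (fun x hx ξ hξ => by have := e2 x hx ξ hξ; rwa [mul_neg ε (f ξ), ← sub_eq_add_neg] at this)
  have : a0 ^ 2 < a0 ^ 2 := by
    refine lt_of_lt_of_le ?_ BM
    rw [sq]
    exact mul_lt_mul'' K1 K2 ha0n ha0n
  exact lt_irrefl _ this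

lemma local_bm (G : Good n H) {f : Euc n → ℝ} {w : Euc n → Euc n}
    (hf : ∀ x ∈ sphere (0 : Euc n) 1, HasStrictFDerivAt f ((innerSL ℝ (w x)).comp (Em H x)) x)
    (hw : ContinuousOn w (sphere (0 : Euc n) 1))
    (h0 : ∫ x : sphere (0 : Euc n) 1, volDens n H x * f x ∂(sphMeasure n) = 0) :
    n * ∫ x : sphere (0 : Euc n) 1, volDens n H x * f x ^ 2 ∂(sphMeasure n) ≤
      ∫ x : sphere (0 : Euc n) 1, volDens n H x * (H x * ⟪Em H x (w x), w x⟫) ∂(sphMeasure n) := by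
  have hwS : Continuous (fun x : sphere (0 : Euc n) 1 => w x) := continuousOn_iff_continuous_domRestrict.1 hw
  have hD := G.volDens_contS
  set J := ∫ x : sphere (0 : Euc n) 1, volDens n H x * (H x * ⟪Em H x (w x), w x⟫) ∂(sphMeasure n)
  set a0 := ∫ x : sphere (0 : Euc n) 1, volDens n H x ∂(sphMeasure n) with ha0
  have hJ : ∀ l : ℝ, 0 < l → ∀ δ, 2 * ∫ x : sphere (0 : Euc n) 1, volDens n H x * Qf H w l δ x ∂(sphMeasure n)
      = J / l + 2 * δ * a0 := by
    intro l hl δ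
    have i1 : Integrable (fun x : sphere (0 : Euc n) 1 => volDens n H x) (sphMeasure n) := sph_int hD
    have i2 : Integrable (fun x : sphere (0 : Euc n) 1 => volDens n H x * (H x * ⟪Em H x (w x), w x⟫))
      (sphMeasure n) := sph_int (hD.mul (G.H_contS.mul ((G.E_contS.clm_apply hwS).inner hwS)))
    have e : (fun x : sphere (0 : Euc n) 1 => volDens n H x * Qf H w l δ x) = fun x : sphere (0 : Euc n) 1 =>
        (1 / (2 * l)) * (volDens n H x * (H x * ⟪Em H x (w x), w x⟫)) + δ * volDens n H x := by
      ext x; simp only [Qf]; ring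
    rw [e, integral_add (i2.const_mul _) (i1.const_mul _), integral_const_mul, integral_const_mul]
    change 2 * (1 / (2 * l) * J + δ * a0) = J / l + 2 * δ * a0
    field_simp
  have lim : Filter.Tendsto (fun l : ℝ => J / l + 2 * (1 - l) * a0) (𝓝[<] 1) (𝓝 J) := by
    have : ContinuousAt (fun l : ℝ => J / l + 2 * (1 - l) * a0) 1 :=
      (continuousAt_const.div continuousAt_id one_ne_zero).add (by fun_prop)
    have := this.tendsto
    simp at this
    exact this.mono_left nhdsWithin_le_nhds
  refine ge_of_tendsto lim ?_
  filter_upwards [Ioo_mem_nhdsLT (zero_lt_one' ℝ)] with l hl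
  rw [← hJ l hl.1]
  exact G.local_bm_aux hf hw h0 hl.1 hl.2 (by linarith [hl.2])

end Good
end

end

section

namespace Good
variable {n : ℕ} {H : Euc n → ℝ}

lemma polar (k : ℝ → ℝ) (g : Euc n → ℝ) :
    ∫ y : Euc n, g (‖y‖⁻¹ • y) * k ‖y‖ = (∫ x : sphere (0 : Euc n) 1, g x ∂(sphMeasure n)) *
      ∫ r : Set.Ioi (0:ℝ), k r ∂(Measure.volumeIoiPow n) := by
  have hdim : Module.finrank ℝ (Euc n) - 1 = n := by simp
  calc ∫ y : Euc n, g (‖y‖⁻¹ • y) * k ‖y‖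
      = ∫ y : ({(0 : Euc n)}ᶜ : Set (Euc n)), g (‖y.1‖⁻¹ • y.1) * k ‖y.1‖
          ∂((volume : Measure (Euc n)).comap Subtype.val) := by
        rw [integral_subtype_comap (measurableSet_singleton _).compl
          (fun y : Euc n => g (‖y‖⁻¹ • y) * k ‖y‖), restrict_compl_singleton]
    _ = ∫ z : sphere (0 : Euc n) 1 × Set.Ioi (0:ℝ), g z.1 * k z.2
          ∂((volume : Measure (Euc n)).toSphere.prod (.volumeIoiPow n)) := by
        have := (volume : Measure (Euc n)).measurePreserving_homeomorphUnitSphereProd.integral_comp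
          (Homeomorph.measurableEmbedding _)
          (fun z : sphere (0 : Euc n) 1 × Set.Ioi (0:ℝ) => g z.1 * k z.2)
        rw [hdim] at this
        simpa using this
    _ = _ := integral_prod_mul (fun x : sphere (0 : Euc n) 1 => g x) (fun r : Set.Ioi (0:ℝ) => k r)

/-- cutoff -/
def cut : ContDiffBump (1:ℝ) := ⟨1/4, 1/2, by norm_num, by norm_num⟩

lemma cut_near0 : ∀ᶠ y : Euc n in nhds 0, cut (‖y‖^2) = 0 := by
  have : ∀ᶠ y : Euc n in nhds 0, ‖y‖^2 < 1/2 := by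
    have : Continuous (fun y : Euc n => ‖y‖^2) := by fun_prop
    exact this.continuousAt.eventually_lt continuousAt_const (by simp)
  filter_upwards [this] with y hy
  apply cut.zero_of_le_dist
  rw [Real.dist_eq, abs_sub_comm, abs_of_nonneg (by linarith)]
  simp only [cut]; linarith

lemma cut_contDiff {F : Type*} [NormedAddCommGroup F] [NormedSpace ℝ F] {m : ℕ∞} {V : Euc n → F}
    (hV : ∀ y ≠ 0, ContDiffAt ℝ m V y) : ContDiff ℝ m (fun y => cut (‖y‖^2) • V y) := by
  rw [contDiff_iff_contDiffAt]
  intro y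
  by_cases hy : y = 0
  · subst hy
    refine (contDiffAt_const (c := (0:F))).congr_of_eventuallyEq ?_
    filter_upwards [cut_near0] with y hy
    simp [hy]
  · exact ((cut.contDiff.comp (contDiff_norm_sq ℝ)).contDiffAt).smul (hV y hy)

lemma cut_supp {F : Type*} [NormedAddCommGroup F] [NormedSpace ℝ F] (V : Euc n → F) :
    HasCompactSupport (fun y => cut (‖y‖^2) • V y) := by
  refine HasCompactSupport.intro (isCompact_closedBall 0 2) fun y hy => ?_
  simp only [mem_closedBall, dist_zero_right, not_le] at hy
  rw [cut.zero_of_le_dist, zero_smul]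
  have : 4 < ‖y‖^2 := by nlinarith
  rw [Real.dist_eq, abs_of_nonneg (by linarith)]
  simp only [cut]; linarith

lemma radial_ne (n : ℕ) (m : ℝ) : ∫ r : Set.Ioi (0:ℝ), cut (r.1^2) * r.1^m ∂(Measure.volumeIoiPow n) ≠ 0 := by
  have h1 := polar (n := n) (fun r => cut (r^2) * r^m) (fun _ => 1)
  intro h0
  rw [h0, mul_zero] at h1
  have hc : ContDiff ℝ (0:ℕ∞) (fun y : Euc n => cut (‖y‖^2) • ‖y‖^m) :=
    cut_contDiff fun y hy => (contDiffAt_norm ℝ hy).rpow_const_of_ne (by simpa using hy)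
  have h2 := hc.continuous.integral_pos_of_hasCompactSupport_nonneg_nonzero (μ := volume) (x := EuclideanSpace.single 0 1)
    (cut_supp _) (fun y => by
      have : 0 ≤ cut (‖y‖^2) := cut.nonneg
      simp only [Pi.zero_apply, smul_eq_mul]
      positivity) (by
      have : cut (1:ℝ) = 1 := cut.one_of_mem_closedBall (by simp [cut])
      simp [this])
  simp only [one_mul, smul_eq_mul] at h1 h2
  linarith

lemma sph_div {W : Euc n → Euc n} {d : Euc n → ℝ} {m : ℝ} (hC : ∀ y ≠ 0, ContDiffAt ℝ (1:ℕ∞) W y)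
    (ht : ∀ y ≠ 0, ⟪y, W y⟫ = 0)
    (hd : ∀ y ≠ 0, ∑ i, ⟪fderiv ℝ W y (EuclideanSpace.basisFun (Fin (n+1)) ℝ i),
      EuclideanSpace.basisFun (Fin (n+1)) ℝ i⟫ = ‖y‖ ^ m * d (‖y‖⁻¹ • y)) :
    ∫ x : sphere (0 : Euc n) 1, d x ∂(sphMeasure n) = 0 := by
  set b := EuclideanSpace.basisFun (Fin (n+1)) ℝ
  set U : Euc n → Euc n := fun y => cut (‖y‖^2) • W y with hU
  have hUc : ContDiff ℝ (1:ℕ∞) U := cut_contDiff hC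
  have hUs : HasCompactSupport U := cut_supp W
  have hUd : Differentiable ℝ U := hUc.differentiable (by simp)
  have hfc : Continuous (fderiv ℝ U) := hUc.continuous_fderiv (by simp)
  have hint : ∀ i, Integrable (fun y => ⟪fderiv ℝ U y (b i), b i⟫) := by
    intro i
    refine Continuous.integrable_of_hasCompactSupport (by fun_prop) ?_
    exact (hUs.fderiv (𝕜 := ℝ)).comp_left (g := fun L : Euc n →L[ℝ] Euc n => ⟪L (b i), b i⟫) (by simp)
  have hz : ∀ i, ∫ y, ⟪fderiv ℝ U y (b i), b i⟫ = 0 := by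
    intro i
    have e : ∀ y, fderiv ℝ (fun y => ⟪U y, b i⟫) y (b i) = ⟪fderiv ℝ U y (b i), b i⟫ := by
      intro y
      rw [fderiv_inner_apply ℝ (hUd y) (by fun_prop)]
      simp
    have := integral_mul_fderiv_eq_neg_fderiv_mul_of_integrable (μ := (volume : Measure (Euc n)))
      (f := fun _ : Euc n => (1:ℝ)) (g := fun y => ⟪U y, b i⟫) (v := b i) (by simp)
      (by simpa only [one_mul, e] using hint i)
      (by
        simp only [one_mul]
        refine Continuous.integrable_of_hasCompactSupport (by fun_prop) ?_
        exact hUs.comp_left (g := fun L : Euc n => ⟪L, b i⟫) (by simp))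
      (by simp) (fun x _ => (hUd x).inner ℝ (by fun_prop))
    simpa only [one_mul, e, fderiv_fun_const, Pi.zero_apply, ContinuousLinearMap.zero_apply, zero_mul, integral_zero, neg_zero] using this
  have hsum : ∫ y, ∑ i, ⟪fderiv ℝ U y (b i), b i⟫ = 0 := by
    rw [integral_finsetSum _ fun i _ => hint i]
    simp [hz]
  have hpt : ∀ y, ∑ i, ⟪fderiv ℝ U y (b i), b i⟫ = d (‖y‖⁻¹ • y) * (cut (‖y‖^2) * ‖y‖^m) := by
    intro y
    by_cases hy : y = 0
    · subst hy
      have : U =ᶠ[nhds 0] fun _ => 0 := by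
        filter_upwards [cut_near0] with y hy
        simp [hU, hy]
      have h0 := (cut_near0 (n := n)).self_of_nhds
      rw [this.fderiv_eq, h0]
      simp
    · have hWd : HasFDerivAt W (fderiv ℝ W y) y := ((hC y hy).differentiableAt (by simp)).hasFDerivAt
      have hcd : HasFDerivAt (fun y : Euc n => cut (‖y‖^2)) (deriv cut (‖y‖^2) • (2 • innerSL ℝ y)) y :=
        ((cut.contDiff (n := 1)).differentiable (by simp) _).hasDerivAt.comp_hasFDerivAt y (hasStrictFDerivAt_norm_sq y).hasFDerivAt
      have hUd' := (hcd.smul hWd).fderiv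
      change fderiv ℝ U y = _ at hUd'
      rw [hUd']
      have : ∀ i, ⟪(cut (‖y‖^2) • fderiv ℝ W y + (deriv cut (‖y‖^2) • (2 • innerSL ℝ y)).smulRight (W y)) (b i), b i⟫
        = cut (‖y‖^2) * ⟪fderiv ℝ W y (b i), b i⟫ + deriv cut (‖y‖^2) * 2 * (⟪y, b i⟫ * ⟪b i, W y⟫) := by
        intro i
        rw [real_inner_comm (W y) (b i)]
        simp only [ContinuousLinearMap.add_apply, ContinuousLinearMap.smul_apply, ContinuousLinearMap.smulRight_apply, inner_add_left, inner_smul_left, innerSL_apply_apply]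
        simp
        ring
      simp_rw [this]
      rw [Finset.sum_add_distrib, ← Finset.mul_sum, ← Finset.mul_sum, b.sum_inner_mul_inner, ht y hy, hd y hy]
      ring
  simp_rw [hpt] at hsum
  rw [polar (fun r => cut (r^2) * r^m) d] at hsum
  exact (mul_eq_zero.1 hsum).resolve_right (radial_ne n m)

end Good

end

section

namespace Good
variable {n : ℕ} {H : Euc n → ℝ}

lemma norm_rpow_deriv (a : ℝ) {v : Euc n} (hv : v ≠ 0) :
    HasStrictFDerivAt (fun z : Euc n => ‖z‖ ^ a) ((a * ‖v‖ ^ (a - 2)) • innerSL ℝ v) v := by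
  have hp : 0 < ‖v‖ := norm_pos_iff.2 hv
  have h := (hasStrictFDerivAt_norm_sq v).rpow_const (p := a / 2) (Or.inl (by positivity))
  have e : (fun z : Euc n => (‖z‖ ^ 2) ^ (a / 2)) = fun z => ‖z‖ ^ a := by
    ext z
    rw [← Real.rpow_natCast, ← Real.rpow_mul (norm_nonneg _)]
    congr 1; push_cast; ring
  rw [e] at h
  have e2 : (a * ‖v‖ ^ (a - 2)) • innerSL ℝ v = (a / 2 * (‖v‖ ^ 2) ^ (a / 2 - 1)) • 2 • innerSL ℝ v := by
    rw [← Real.rpow_natCast, ← Real.rpow_mul (norm_nonneg _)]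
    have : ((2:ℕ):ℝ) * (a / 2 - 1) = a - 2 := by push_cast; ring
    rw [this]
    module
  rw [e2]
  exact h

lemma H_pos (G : Good n H) {y : Euc n} (hy : y ≠ 0) : 0 < H y := by
  have h := G.pos _ (nrm_mem hy)
  have hp : 0 < ‖y‖ := norm_pos_iff.2 hy
  rw [G.hom _ (inv_pos.2 hp)] at h
  exact (mul_pos_iff_of_pos_left (inv_pos.2 hp)).1 h

lemma X_ne (G : Good n H) {y : Euc n} (hy : y ≠ 0) : gradient H y ≠ 0 := by
  intro h
  have h1 := G.euler hy
  rw [h, inner_zero_left] at h1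
  exact (G.H_pos hy).ne h1

/-- trace of the hessian -/
def trE (H : Euc n → ℝ) (y : Euc n) : ℝ :=
  ∑ i, ⟪Em H y (EuclideanSpace.basisFun (Fin (n+1)) ℝ i), EuclideanSpace.basisFun (Fin (n+1)) ℝ i⟫

lemma E_scale (G : Good n H) {y : Euc n} (hy : y ≠ 0) (v : Euc n) :
    Em H (‖y‖⁻¹ • y) v = ‖y‖ • Em H y v := by
  have hp : 0 < ‖y‖ := norm_pos_iff.2 hy
  have := G.E_hom hy (inv_pos.2 hp) v
  rw [← this, smul_inv_smul₀ hp.ne']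

lemma E_symm' (G : Good n H) {y : Euc n} (hy : y ≠ 0) (d e : Euc n) :
    ⟪Em H y d, e⟫ = ⟪d, Em H y e⟫ := by
  have hp : 0 < ‖y‖ := norm_pos_iff.2 hy
  have := G.E_symm (nrm_mem hy) d e
  rw [G.E_scale hy, G.E_scale hy, inner_smul_left, inner_smul_right] at this
  exact mul_left_cancel₀ hp.ne' this

/-- the integrand -/
def gI (H : Euc n → ℝ) (p α : ℝ) (x : Euc n) : ℝ :=
  (p+1) * (H x ^ p * ‖gradient H x‖ ^ α) * (‖gradient H x‖^2 - H x^2)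
  + α * (H x ^ (p+1) * ‖gradient H x‖ ^ (α-2)) * ⟪Em H x (gradient H x), gradient H x⟫
  + H x ^ (p+1) * ‖gradient H x‖ ^ α * (trE H x - n * H x)

lemma int_gI (G : Good n H) (p α : ℝ) :
    ∫ x : sphere (0 : Euc n) 1, gI H p α x ∂(sphMeasure n) = 0 := by
  set b := EuclideanSpace.basisFun (Fin (n+1)) ℝ with hb
  set c : Euc n → ℝ := fun y => H y ^ (p+1) * ‖gradient H y‖ ^ α with hc
  set Z : Euc n → Euc n := fun y => ‖y‖^2 • gradient H y - H y • y with hZ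
  have hcC : ∀ y ≠ 0, ContDiffAt ℝ (1:ℕ∞) c y := fun y hy => by
    refine (((G.smoothAt hy).of_le (by simp)).rpow_const_of_ne (G.H_pos hy).ne').mul ?_
    exact ((((G.gradSmoothAt hy).of_le (by simp)).norm ℝ (G.X_ne hy))).rpow_const_of_ne
      (by simpa using G.X_ne hy)
  have hZC : ∀ y ≠ 0, ContDiffAt ℝ (1:ℕ∞) Z y := fun y hy => by
    refine ContDiffAt.sub ?_ ?_
    · exact (contDiff_norm_sq ℝ).contDiffAt.smul ((G.gradSmoothAt hy).of_le (by simp))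
    · exact ((G.smoothAt hy).of_le (by simp)).smul contDiffAt_id
  refine sph_div (W := fun y => c y • Z y) (d := gI H p α) (m := p + 2) (fun y hy => (hcC y hy).smul (hZC y hy)) ?_ ?_
  · intro y hy
    simp only [hZ, inner_smul_right, inner_sub_right, real_inner_self_eq_norm_sq]
    rw [real_inner_comm, G.euler hy]
    ring
  · intro y hy
    have hp : 0 < ‖y‖ := norm_pos_iff.2 hy
    have hH := G.H_pos hy
    have hXp : 0 < ‖gradient H y‖ := norm_pos_iff.2 (G.X_ne hy)
    have d1 := (G.hasFDeriv hy).rpow_const (p := p+1) (Or.inl hH.ne')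
    have d2 := (norm_rpow_deriv α (G.X_ne hy)).hasFDerivAt.comp y (G.hasE hy)
    have dc := d1.mul d2
    have dZ := ((hasStrictFDerivAt_norm_sq y).hasFDerivAt.smul (G.hasE hy)).sub
      ((G.hasFDeriv hy).smul (hasFDerivAt_id y))
    have dW := (dc.smul dZ).fderiv
    change fderiv ℝ (fun y => c y • Z y) y = _ at dW
    rw [dW]
    set X := gradient H y with hX
    have key : ∀ v, ⟪(((H y ^ (p+1) * ‖X‖^α) • (‖y‖^2 • Em H y + ((2:ℕ) • innerSL ℝ y).smulRight X - (H y • ContinuousLinearMap.id ℝ (Euc n) + (innerSL ℝ X).smulRight y)))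
        + (H y ^ (p+1) • ((α * ‖X‖^(α-2)) • innerSL ℝ X).comp (Em H y) + ‖X‖^α • ((p+1) * H y ^ (p+1-1)) • innerSL ℝ X).smulRight (Z y)) v, v⟫
       = (H y ^ (p+1) * ‖X‖^α) * (‖y‖^2 * ⟪Em H y v, v⟫ + 2 * (⟪y, v⟫ * ⟪v, X⟫) - H y * ⟪v, v⟫ - ⟪X, v⟫ * ⟪v, y⟫)
         + (H y ^ (p+1) * (α * ‖X‖^(α-2))) * (⟪Em H y X, v⟫ * ⟪v, Z y⟫) + ‖X‖^α * ((p+1) * H y ^ (p+1-1)) * (⟪X, v⟫ * ⟪v, Z y⟫) := by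
      intro v
      have e1 : ⟪X, Em H y v⟫ = ⟪Em H y X, v⟫ := (G.E_symm' hy X v).symm
      have e2 := real_inner_comm v X
      have e3 := real_inner_comm v y
      have e4 := real_inner_comm v (Z y)
      change ⟪(H y ^ (p+1) * ‖X‖^α) • (‖y‖^2 • Em H y v + ((2:ℕ) • ⟪y, v⟫) • X - (H y • v + ⟪X, v⟫ • y))
        + (H y ^ (p+1) • ((α * ‖X‖^(α-2)) • ⟪X, Em H y v⟫) + ‖X‖^α • ((p+1) * H y ^ (p+1-1)) • ⟪X, v⟫) • Z y, v⟫ = _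
      rw [e1, ← e2, ← e3, ← e4]
      simp only [inner_add_left, inner_sub_left, real_inner_smul_left, smul_eq_mul, nsmul_eq_mul, e2, e3, e4]
      push_cast
      ring
    refine (Finset.sum_congr rfl fun i _ => key (b i)).trans ?_
    have hE0 : ⟪Em H y X, y⟫ = 0 := by rw [G.E_symm' hy, G.E_self hy, inner_zero_right]
    have s1 : ∑ i, ⟪b i, b i⟫ = (n+1 : ℝ) := by simp
    simp only [Finset.sum_add_distrib, Finset.sum_sub_distrib, ← Finset.mul_sum, b.sum_inner_mul_inner, s1]
    have t1 : ⟪X, y⟫ = H y := G.euler hy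
    have t2 : ⟪y, X⟫ = H y := by rw [real_inner_comm, t1]
    have t3 : ⟪Em H y X, Z y⟫ = ‖y‖^2 * ⟪Em H y X, X⟫ := by
      simp only [hZ, inner_sub_right, real_inner_smul_right, hE0]; ring
    have t4 : ⟪X, Z y⟫ = ‖y‖^2 * ‖X‖^2 - H y ^ 2 := by
      simp only [hZ, inner_sub_right, real_inner_smul_right, t1, ← hX, real_inner_self_eq_norm_sq]; ring
    rw [t1, t2, t3, t4]
    -- scaling
    have u1 : H (‖y‖⁻¹ • y) = ‖y‖⁻¹ * H y := G.hom _ (inv_pos.2 hp) y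
    have u2 : gradient H (‖y‖⁻¹ • y) = X := G.grad_hom hy (inv_pos.2 hp)
    have u3 : trE H (‖y‖⁻¹ • y) = ‖y‖ * ∑ i, ⟪Em H y (b i), b i⟫ := by
      simp only [trE, G.E_scale hy, real_inner_smul_left, ← Finset.mul_sum, ← hb]
    simp only [gI, u1, u2, u3, G.E_scale hy, real_inner_smul_left]
    have v1 : ‖y‖ ^ (p+2) = ‖y‖^p * ‖y‖^2 := by rw [Real.rpow_add hp]; norm_num
    have v2 : (‖y‖⁻¹ * H y) ^ p = (‖y‖^p)⁻¹ * H y ^ p := by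
      rw [Real.mul_rpow (by positivity) hH.le, Real.inv_rpow hp.le]
    have v3 : ∀ t : ℝ, 0 < t → t ^ (p+1) = t^p * t := fun t ht => by rw [Real.rpow_add ht, Real.rpow_one]
    rw [v3 _ (by positivity : 0 < ‖y‖⁻¹ * H y), v3 _ hH, v1, v2, add_sub_cancel_right]
    have hpp : 0 < ‖y‖^p := by positivity
    field_simp
    ring

end Good

end

section

namespace Good
variable {n : ℕ} {H : Euc n → ℝ}

lemma r_contS (G : Good n H) (a : ℝ) :
    Continuous (fun x : sphere (0 : Euc n) 1 => ‖gradient H x‖ ^ a) :=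
  G.X_contS.norm.rpow_const fun x => Or.inl (by simpa using G.X_ne (ne0 x.2))

lemma Hp_contS (G : Good n H) (a : ℝ) :
    Continuous (fun x : sphere (0 : Euc n) 1 => H x ^ a) :=
  G.H_contS.rpow_const fun x => Or.inl (G.pos x x.2).ne'

/-- the vector field for coordinate `e` -/
def wv (H : Euc n → ℝ) (α : ℝ) (e : Euc n) (x : Euc n) : Euc n :=
  ‖gradient H x‖ ^ α • e + (α * ‖gradient H x‖ ^ (α - 2) * ⟪e, gradient H x⟫) • gradient H x

lemma wv_contS (G : Good n H) (α : ℝ) (e : Euc n) :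
    Continuous (fun x : sphere (0 : Euc n) 1 => wv H α e x) := by
  unfold wv
  have h1 : Continuous (fun x : sphere (0 : Euc n) 1 => ⟪e, gradient H x⟫) :=
    continuous_const.inner G.X_contS
  exact ((G.r_contS α).smul continuous_const).add
    (((continuous_const.mul (G.r_contS (α-2))).mul h1).smul G.X_contS)

lemma f_deriv (G : Good n H) (α m : ℝ) (e : Euc n) {x : Euc n} (hx : x ≠ 0) :
    HasStrictFDerivAt (fun y => ‖gradient H y‖ ^ α * ⟪e, gradient H y⟫ - m)
      ((innerSL ℝ (wv H α e x)).comp (Em H x)) x := by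
  have h1 := (norm_rpow_deriv α (G.X_ne hx)).comp x (G.hasEs hx)
  have h2 := ((innerSL ℝ e).hasStrictFDerivAt (x := gradient H x)).comp x (G.hasEs hx)
  have h3 := (h1.mul h2).sub_const m
  refine h3.congr_fderiv ?_
  ext v
  change ‖gradient H x‖ ^ α * ⟪e, Em H x v⟫ + ⟪e, gradient H x⟫ *
    ((α * ‖gradient H x‖ ^ (α - 2)) * ⟪gradient H x, Em H x v⟫) = ⟪wv H α e x, Em H x v⟫
  simp only [wv, inner_add_left, real_inner_smul_left]
  ring

lemma a0_pos (G : Good n H) : 0 < ∫ x : sphere (0 : Euc n) 1, volDens n H x ∂(sphMeasure n) := by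
  refine G.volDens_contS.integral_pos_of_hasCompactSupport_nonneg_nonzero
    (HasCompactSupport.of_compactSpace _) (fun x => (G.volDens_pos x.2).le)
    (x := ⟨EuclideanSpace.single 0 1, by simp⟩) (G.volDens_pos (by simp)).ne'

lemma coord_ineq (G : Good n H) (α : ℝ) (e : Euc n) :
    (n:ℝ) * ((∫ x : sphere (0 : Euc n) 1, volDens n H x * (‖gradient H x‖ ^ α * ⟪e, gradient H x⟫) ^ 2 ∂(sphMeasure n))
      - (∫ x : sphere (0 : Euc n) 1, volDens n H x * (‖gradient H x‖ ^ α * ⟪e, gradient H x⟫) ∂(sphMeasure n)) ^ 2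
        / ∫ x : sphere (0 : Euc n) 1, volDens n H x ∂(sphMeasure n))
    ≤ ∫ x : sphere (0 : Euc n) 1, volDens n H x * (H x * ⟪Em H x (wv H α e x), wv H α e x⟫) ∂(sphMeasure n) := by
  set a0 := ∫ x : sphere (0 : Euc n) 1, volDens n H x ∂(sphMeasure n) with ha0
  set b := ∫ x : sphere (0 : Euc n) 1, volDens n H x * (‖gradient H x‖ ^ α * ⟪e, gradient H x⟫) ∂(sphMeasure n) with hb
  have hap : 0 < a0 := G.a0_pos
  set m := b / a0 with hm
  have hD := G.volDens_contS
  have hf : Continuous (fun x : sphere (0 : Euc n) 1 => ‖gradient H x‖ ^ α * ⟪e, gradient H x⟫) :=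
    (G.r_contS α).mul (continuous_const.inner G.X_contS)
  have i1 : Integrable (fun x : sphere (0 : Euc n) 1 => volDens n H x * (‖gradient H x‖ ^ α * ⟪e, gradient H x⟫)) (sphMeasure n) :=
    sph_int (hD.mul hf)
  have i2 : Integrable (fun x : sphere (0 : Euc n) 1 => volDens n H x * (‖gradient H x‖ ^ α * ⟪e, gradient H x⟫) ^ 2) (sphMeasure n) :=
    sph_int (hD.mul (hf.pow 2))
  have i0 : Integrable (fun x : sphere (0 : Euc n) 1 => volDens n H x) (sphMeasure n) := sph_int hD
  have key := G.local_bm (f := fun y => ‖gradient H y‖ ^ α * ⟪e, gradient H y⟫ - m) (w := wv H α e)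
    (fun x hx => G.f_deriv α m e (ne0 hx))
    (continuousOn_iff_continuous_domRestrict.2 (G.wv_contS α e)) (by
      simp only [mul_sub]
      rw [integral_sub i1 (i0.mul_const m), integral_mul_const, ← hb, ← ha0, hm]
      field_simp
      ring)
  have e1 : ∫ x : sphere (0 : Euc n) 1, volDens n H x * (‖gradient H x‖ ^ α * ⟪e, gradient H x⟫ - m) ^ 2 ∂(sphMeasure n)
      = (∫ x : sphere (0 : Euc n) 1, volDens n H x * (‖gradient H x‖ ^ α * ⟪e, gradient H x⟫) ^ 2 ∂(sphMeasure n)) - b ^ 2 / a0 := by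
    have : ∀ x : sphere (0 : Euc n) 1, volDens n H x * (‖gradient H x‖ ^ α * ⟪e, gradient H x⟫ - m) ^ 2 =
      (volDens n H x * (‖gradient H x‖ ^ α * ⟪e, gradient H x⟫) ^ 2 -
        2 * m * (volDens n H x * (‖gradient H x‖ ^ α * ⟪e, gradient H x⟫))) + m^2 * volDens n H x := fun x => by ring
    simp_rw [this]
    have i3 : Integrable (fun x : sphere (0 : Euc n) 1 => volDens n H x * (‖gradient H x‖ ^ α * ⟪e, gradient H x⟫) ^ 2 -
        2 * m * (volDens n H x * (‖gradient H x‖ ^ α * ⟪e, gradient H x⟫))) (sphMeasure n) := i2.sub (i1.const_mul _)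
    rw [integral_add i3 (i0.const_mul _), integral_sub i2 (i1.const_mul _),
      integral_const_mul, integral_const_mul, ← hb, ← ha0, hm]
    field_simp
    ring
  rw [e1] at key
  exact key

lemma sum_w (G : Good n H) (α : ℝ) {x : Euc n} (hx : x ∈ sphere (0 : Euc n) 1) :
    ∑ k, ⟪Em H x (wv H α (EuclideanSpace.basisFun (Fin (n+1)) ℝ k) x), wv H α (EuclideanSpace.basisFun (Fin (n+1)) ℝ k) x⟫
     = (‖gradient H x‖ ^ α)^2 * trE H x + (2 * α + α^2) * (‖gradient H x‖ ^ α * ‖gradient H x‖ ^ (α-2)) *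
      ⟪Em H x (gradient H x), gradient H x⟫ := by
  set b := EuclideanSpace.basisFun (Fin (n+1)) ℝ with hb
  set X := gradient H x with hX
  set A := ‖X‖^α with hA
  set B := ‖X‖^(α-2) with hB
  have hAB : B * ‖X‖^2 = A := by
    rw [hB, hA, ← Real.rpow_natCast, ← Real.rpow_add (norm_pos_iff.2 (G.X_ne (ne0 hx)))]
    congr 1; push_cast; ring
  have : ∀ k, ⟪Em H x (wv H α (b k) x), wv H α (b k) x⟫ = A^2 * ⟪Em H x (b k), b k⟫
      + 2 * α * A * B * (⟪Em H x X, b k⟫ * ⟪b k, X⟫) + α^2 * B^2 * ⟪Em H x X, X⟫ * (⟪X, b k⟫ * ⟪b k, X⟫) := by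
    intro k
    have e1 : ⟪Em H x (b k), X⟫ = ⟪Em H x X, b k⟫ := by
      rw [G.E_symm hx, real_inner_comm]
    have e2 : ⟪X, b k⟫ = ⟪b k, X⟫ := real_inner_comm _ _
    simp only [wv, ← hX, ← hA, ← hB, map_add, map_smul, inner_add_left, inner_add_right,
      real_inner_smul_left, real_inner_smul_right, e1, e2]
    ring
  simp_rw [this]
  simp only [Finset.sum_add_distrib, ← Finset.mul_sum, b.sum_inner_mul_inner, real_inner_self_eq_norm_sq]
  rw [← hAB, trE]
  ring

lemma summed (G : Good n H) (α : ℝ) :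
    (n:ℝ) * ((∫ x : sphere (0 : Euc n) 1, volDens n H x * ((‖gradient H x‖ ^ α)^2 * ‖gradient H x‖ ^ 2) ∂(sphMeasure n))
      - ‖∫ x : sphere (0 : Euc n) 1, volDens n H x • (‖gradient H x‖ ^ α • gradient H x) ∂(sphMeasure n)‖ ^ 2
        / ∫ x : sphere (0 : Euc n) 1, volDens n H x ∂(sphMeasure n))
    ≤ ∫ x : sphere (0 : Euc n) 1, volDens n H x * (H x * ((‖gradient H x‖ ^ α)^2 * trE H x
      + (2 * α + α^2) * (‖gradient H x‖ ^ α * ‖gradient H x‖ ^ (α-2)) *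
      ⟪Em H x (gradient H x), gradient H x⟫)) ∂(sphMeasure n) := by
  set b := EuclideanSpace.basisFun (Fin (n+1)) ℝ with hb
  have hD := G.volDens_contS
  have hf : ∀ e, Continuous (fun x : sphere (0 : Euc n) 1 => ‖gradient H x‖ ^ α * ⟪e, gradient H x⟫) := fun e =>
    (G.r_contS α).mul (continuous_const.inner G.X_contS)
  have key := Finset.sum_le_sum fun k (_ : k ∈ Finset.univ) => G.coord_ineq α (b k)
  rw [← Finset.mul_sum, Finset.sum_sub_distrib, ← Finset.sum_div] at key
  have j1 : ∀ k ∈ Finset.univ, Integrable (fun x : sphere (0 : Euc n) 1 =>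
      volDens n H x * (‖gradient H x‖ ^ α * ⟪b k, gradient H x⟫) ^ 2) (sphMeasure n) :=
    fun k _ => sph_int (hD.mul ((hf (b k)).pow 2))
  have j2 : ∀ k ∈ Finset.univ, Integrable (fun x : sphere (0 : Euc n) 1 =>
      volDens n H x * (H x * ⟪Em H x (wv H α (b k) x), wv H α (b k) x⟫)) (sphMeasure n) :=
    fun k _ => sph_int (hD.mul (G.H_contS.mul
      ((G.E_contS.clm_apply (G.wv_contS α (b k))).inner (G.wv_contS α (b k)))))
  rw [← integral_finsetSum _ j1, ← integral_finsetSum _ j2] at key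
  have iV : Integrable (fun x : sphere (0 : Euc n) 1 => volDens n H x • (‖gradient H x‖ ^ α • gradient H x)) (sphMeasure n) :=
    sph_int (hD.smul ((G.r_contS α).smul G.X_contS))
  have e1 : ∑ k, (∫ x : sphere (0 : Euc n) 1, volDens n H x * (‖gradient H x‖ ^ α * ⟪b k, gradient H x⟫) ∂(sphMeasure n)) ^ 2
     = ‖∫ x : sphere (0 : Euc n) 1, volDens n H x • (‖gradient H x‖ ^ α • gradient H x) ∂(sphMeasure n)‖ ^ 2 := by
    rw [← b.sum_sq_norm_inner_right]
    refine Finset.sum_congr rfl fun k _ => ?_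
    rw [← integral_inner iV, Real.norm_eq_abs, sq_abs]
    simp only [real_inner_smul_right]
  have e2 : ∀ x : sphere (0 : Euc n) 1, ∑ k, volDens n H x * (‖gradient H x‖ ^ α * ⟪b k, gradient H x⟫) ^ 2
      = volDens n H x * ((‖gradient H x‖ ^ α)^2 * ‖gradient H x‖ ^ 2) := by
    intro x
    rw [← b.sum_sq_norm_inner_right (gradient H x.1), Finset.mul_sum, Finset.mul_sum]
    simp only [mul_pow, Real.norm_eq_abs, sq_abs]
  have e3 : ∀ x : sphere (0 : Euc n) 1, ∑ k, volDens n H x * (H x * ⟪Em H x (wv H α (b k) x), wv H α (b k) x⟫)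
      = volDens n H x * (H x * ((‖gradient H x‖ ^ α)^2 * trE H x
      + (2 * α + α^2) * (‖gradient H x‖ ^ α * ‖gradient H x‖ ^ (α-2)) *
      ⟪Em H x (gradient H x), gradient H x⟫)) := by
    intro x
    rw [← G.sum_w α x.2, ← Finset.mul_sum, ← Finset.mul_sum]
  simp only [e1, e2, e3] at key
  exact key

lemma sphGrad_eq (G : Good n H) {x : Euc n} (hx : x ∈ sphere (0 : Euc n) 1) :
    ‖sphGrad n H x‖ ^ 2 = ‖gradient H x‖^2 - H x ^ 2 := by
  have hn : ‖x‖ = 1 := by simpa using hx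
  have h0 := ne0 hx
  have h1 := (norm_rpow_deriv (-1) h0).hasFDerivAt.mul (G.hasFDeriv h0)
  have h2 : HasFDerivAt (fun y => H (‖y‖⁻¹ • y)) (innerSL ℝ (gradient H x - H x • x)) x := by
    have h3 := h1.congr_of_eventuallyEq (f₁ := fun y => H (‖y‖⁻¹ • y)) (by
      filter_upwards [isOpen_compl_singleton.mem_nhds h0] with y hy
      simp only [Pi.mul_apply, Real.rpow_neg_one]
      exact G.hom _ (inv_pos.2 (norm_pos_iff.2 hy)) y)
    refine h3.congr_fderiv ?_
    rw [hn]
    simp only [Real.one_rpow, map_sub, map_smul, mul_one]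
    module
  have h3 : sphGrad n H x = gradient H x - H x • x := by
    have : HasGradientAt (fun y => H (‖y‖⁻¹ • y)) (gradient H x - H x • x) x := h2
    exact this.gradient
  rw [h3, norm_sub_sq_real, real_inner_smul_right, G.euler h0, norm_smul, hn, Real.norm_eq_abs, mul_one, sq_abs]
  ring

end Good

end

/-- For a smooth, strictly convex body `K ⊂ ℝ^{n+1}` (`n ≥ 2`) with the
origin in its interior satisfying `h^{p-1}|Dh|^{n+1-q}𝒦 = 1` on `S^n`, with `n ≤ q ≤ n+1`
and `α = q - n - 1`: `(n+1+p) ∫ r^{2α}|∇̄h|² dV ≤ n|∫ r^α X dV|²/∫ dV`. -/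
theorem key_integral_inequality_simplified
    (n : ℕ) (hn : 2 ≤ n) (p q α : ℝ) (hα : α = q - (n : ℝ) - 1)
    (H : Euc n → ℝ) (K : Set (Euc n))
    (hK : K = {y : Euc n | ∀ x : Euc n, ⟪x, y⟫ ≤ H x})
    (hhomog : ∀ c : ℝ, 0 < c → ∀ x : Euc n, H (c • x) = c * H x)
    (hconv : ConvexOn ℝ Set.univ H)
    (hsmooth : ContDiffOn ℝ (⊤ : ℕ∞) H {(0 : Euc n)}ᶜ)
    (hpos : ∀ x ∈ sphere (0 : Euc n) 1, 0 < H x)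
    (hposdef : ∀ x ∈ sphere (0 : Euc n) 1, (bmat n H x).PosDef)
    (heq : ∀ x ∈ sphere (0 : Euc n) 1,
      H x ^ (p - 1) * ‖gradient H x‖ ^ ((n : ℝ) + 1 - q) * gaussCurv n H x = 1)
    (hq1 : (n : ℝ) ≤ q) (hq2 : q ≤ (n : ℝ) + 1) :
    ((n : ℝ) + 1 + p) * ∫ x : sphere (0 : Euc n) 1,
          volDens n H x * (‖gradient H x‖ ^ (2 * α) * ‖sphGrad n H x‖ ^ 2) ∂(sphMeasure n)
      ≤ (n : ℝ) * ‖∫ x : sphere (0 : Euc n) 1,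
            volDens n H x • (‖gradient H x‖ ^ α • gradient H x) ∂(sphMeasure n)‖ ^ 2
          / ∫ x : sphere (0 : Euc n) 1, volDens n H x ∂(sphMeasure n) := by
  have G : Good n H := ⟨hhomog, hconv, hsmooth, hpos, hposdef⟩
  have hD := G.volDens_contS
  have hA := G.r_contS α
  have hB := G.r_contS (α - 2)
  have hX := G.X_contS
  have hh := G.H_contS
  have hEX : Continuous (fun x : sphere (0 : Euc n) 1 => ⟪Em H x (gradient H x), gradient H x⟫) :=
    (G.E_contS.clm_apply hX).inner hX
  have htr : Continuous (fun x : sphere (0 : Euc n) 1 => Good.trE H x) := by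
    unfold Good.trE
    exact continuous_finsetSum _ fun i _ => (G.E_contS.clm_apply continuous_const).inner continuous_const
  have hr2 : Continuous (fun x : sphere (0 : Euc n) 1 => ‖gradient H x‖ ^ 2) := hX.norm.pow 2
  have hDeq : ∀ x : sphere (0 : Euc n) 1, volDens n H x * ‖gradient H x‖ ^ α = H x ^ p := by
    intro x
    have hHp := hpos x x.2
    have hXp : 0 < ‖gradient H x‖ := norm_pos_iff.2 (G.X_ne (Good.ne0 x.2))
    have h1 := heq x x.2
    have hs : sigman n H x = H x ^ (p - 1) * ‖gradient H x‖ ^ ((n : ℝ) + 1 - q) := by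
      rw [gaussCurv] at h1
      have : sigman n H x ≠ 0 := by
        intro h0; rw [h0] at h1; simp at h1
      field_simp at h1
      exact h1.symm
    have e1 : (n : ℝ) + 1 - q = -α := by rw [hα]; ring
    rw [volDens, hs, e1, Real.rpow_sub hHp, Real.rpow_one, Real.rpow_neg hXp.le]
    have : 0 < ‖gradient H x‖ ^ α := by positivity
    field_simp
  have iT : Integrable (fun x : sphere (0 : Euc n) 1 =>
      volDens n H x * ((‖gradient H x‖ ^ α)^2 * ‖gradient H x‖ ^ 2)) (sphMeasure n) :=
    Good.sph_int (hD.mul ((hA.pow 2).mul hr2))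
  have iR : Integrable (fun x : sphere (0 : Euc n) 1 =>
      volDens n H x * (H x * ((‖gradient H x‖ ^ α)^2 * Good.trE H x
      + (2 * α + α^2) * (‖gradient H x‖ ^ α * ‖gradient H x‖ ^ (α-2)) *
      ⟪Em H x (gradient H x), gradient H x⟫))) (sphMeasure n) :=
    Good.sph_int (hD.mul (hh.mul (((hA.pow 2).mul htr).add
      ((continuous_const.mul (hA.mul hB)).mul hEX))))
  have ig : Integrable (fun x : sphere (0 : Euc n) 1 => Good.gI H p α x) (sphMeasure n) :=
    Good.sph_int ((((continuous_const.mul ((G.Hp_contS p).mul hA)).mul (hr2.sub (hh.pow 2))).add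
      ((continuous_const.mul ((G.Hp_contS (p+1)).mul hB)).mul hEX)).add
      (((G.Hp_contS (p+1)).mul hA).mul (htr.sub (continuous_const.mul hh))))
  have hP : ∀ x : sphere (0 : Euc n) 1,
      volDens n H x * (‖gradient H x‖ ^ (2 * α) * ‖sphGrad n H x‖ ^ 2)
      = volDens n H x * ((‖gradient H x‖ ^ α)^2 * (‖gradient H x‖ ^ 2 - H x ^ 2)) := by
    intro x
    rw [G.sphGrad_eq x.2, mul_comm 2 α, Real.rpow_mul (norm_nonneg _)]
    norm_num
  have iP : Integrable (fun x : sphere (0 : Euc n) 1 =>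
      volDens n H x * ((‖gradient H x‖ ^ α)^2 * (‖gradient H x‖ ^ 2 - H x ^ 2))) (sphMeasure n) :=
    Good.sph_int (hD.mul ((hA.pow 2).mul (hr2.sub (hh.pow 2))))
  have hm : (∫ x : sphere (0 : Euc n) 1, ((n : ℝ) + 1 + p) *
        (volDens n H x * ((‖gradient H x‖ ^ α)^2 * (‖gradient H x‖ ^ 2 - H x ^ 2))) ∂(sphMeasure n))
      ≤ ∫ x : sphere (0 : Euc n) 1, ((n : ℝ) *
        (volDens n H x * ((‖gradient H x‖ ^ α)^2 * ‖gradient H x‖ ^ 2)) -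
        volDens n H x * (H x * ((‖gradient H x‖ ^ α)^2 * Good.trE H x
      + (2 * α + α^2) * (‖gradient H x‖ ^ α * ‖gradient H x‖ ^ (α-2)) *
      ⟪Em H x (gradient H x), gradient H x⟫))) + Good.gI H p α x ∂(sphMeasure n) := by
    refine integral_mono (iP.const_mul _) (((iT.const_mul _).sub iR).add ig) fun x => ?_
    have hHp := hpos x x.2
    have hXp : 0 < ‖gradient H x‖ := norm_pos_iff.2 (G.X_ne (Good.ne0 x.2))
    have hQ := G.E_psd x.2 (gradient H x)
    have hDp := G.volDens_pos x.2
    have hAp : 0 < ‖gradient H x‖ ^ α := by positivity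
    have hBp : 0 < ‖gradient H x‖ ^ (α - 2) := by positivity
    have hneg : α + α ^ 2 ≤ 0 := by
      have : -1 ≤ α := by rw [hα]; linarith
      have : α ≤ 0 := by rw [hα]; linarith
      nlinarith
    have h1 : (α + α^2) * (volDens n H x * H x * ‖gradient H x‖ ^ α * ‖gradient H x‖ ^ (α - 2) *
        ⟪Em H x (gradient H x), gradient H x⟫) ≤ 0 :=
      mul_nonpos_of_nonpos_of_nonneg hneg (by positivity)
    simp only [Good.gI, Real.rpow_add hHp, Real.rpow_one, ← hDeq x]
    nlinarith [h1]
  have iT' := (iT.const_mul (n:ℝ)).sub iR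
  have hm1 := hm.trans_eq (integral_add iT' ig)
  have hm2 := integral_sub (iT.const_mul (n:ℝ)) iR
  rw [G.int_gI p α, add_zero] at hm1
  have hm := hm1.trans_eq hm2
  rw [integral_const_mul, integral_const_mul] at hm
  have hs := G.summed α
  simp_rw [hP]
  rw [mul_sub, ← mul_div_assoc] at hs
  linarith
end
end

section
/- Let n ≥ 2 and let K ⊂ ℝ^{n+1} be a smooth, strictly convex body with the origin in its interior, whose support function h, radial function r, and Gauss curvature 𝒦 satisfy h^{p-1} |Dh|^{n+1-q} 𝒦 = 1 on S^n. Set α = q − n − 1 and dV = h σ_n dμ with σ_n = 1/𝒦. Then ∫ r^{α} X dV = ∫ X h^{p} dμ = ((n+1+p)/n) ∫ r^{α} ∇̄h dV, as identities of vectors in ℝ^{n+1}, where X = Dh = ∇̄h + h x and μ is the spherical Lebesgue measure. -/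
open MeasureTheory Matrix Metric
open scoped RealInnerProductSpace

noncomputable section

open Set Filter Topology Measure

lemma aux_integral_vIP (n : ℕ) (g : ℝ → ℝ) :
    ∫ x : Ioi (0:ℝ), g x ∂(Measure.volumeIoiPow n) = ∫ y in Ioi (0:ℝ), y ^ n * g y := by
  simp only [Measure.volumeIoiPow, ENNReal.ofReal]
  rw [integral_withDensity_eq_integral_smul,
    integral_subtype_comap measurableSet_Ioi fun a ↦ Real.toNNReal (a ^ n) • g a,
    setIntegral_congr_fun measurableSet_Ioi fun x hx ↦ ?_]
  · simp only [NNReal.smul_def, Real.coe_toNNReal _ (pow_nonneg hx.out.le _), smul_eq_mul]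
  · exact (measurable_subtype_coe.pow_const _).real_toNNReal

lemma aux_integrable_vIP (n : ℕ) (g : ℝ → ℝ)
    (hg : IntegrableOn (fun y : ℝ => y ^ n * g y) (Ioi 0)) :
    Integrable (fun x : Ioi (0:ℝ) => g x) (Measure.volumeIoiPow n) := by
  rw [integrableOn_iff_comap_subtypeVal measurableSet_Ioi] at hg
  rw [Measure.volumeIoiPow, integrable_withDensity_iff_integrable_smul', ]
  · refine hg.congr (.of_forall ?_)
    rintro ⟨x, hx : 0 < x⟩
    simp (disch := positivity) [ENNReal.toReal_ofReal]
  · fun_prop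
  · simp

lemma aux_norm_deriv {n : ℕ} (x : Euc n) (hx : x ≠ 0) :
    HasFDerivAt (fun y : Euc n => ‖y‖) (‖x‖⁻¹ • innerSL ℝ x) x := by
  have h := (hasStrictFDerivAt_norm_sq x).hasFDerivAt.sqrt (by simpa using hx)
  have e : (fun y : Euc n => √(‖y‖ ^ 2)) = fun y => ‖y‖ := by
    funext y; exact Real.sqrt_sq (norm_nonneg y)
  rw [e] at h
  have e2 : (‖x‖⁻¹ • innerSL ℝ x : Euc n →L[ℝ] ℝ) = (1 / (2 * √(‖x‖ ^ 2))) • 2 • innerSL ℝ x := by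
    rw [Real.sqrt_sq (norm_nonneg x)]
    ext v
    have : ‖x‖ ≠ 0 := by simpa using hx
    simp
    field_simp
  rw [e2]
  exact h

lemma aux_int_fderiv {n : ℕ} (u : Euc n → ℝ) (hu : ContDiff ℝ 1 u) (hc : HasCompactSupport u)
    (v : Euc n) : ∫ y, fderiv ℝ u y v = 0 := by
  have hi : Integrable (fun y => fderiv ℝ u y v) := by
    have h1 : Continuous (fun y => fderiv ℝ u y v) :=
      (hu.continuous_fderiv one_ne_zero).clm_apply continuous_const
    exact h1.integrable_of_hasCompactSupport (hc.fderiv_apply (𝕜 := ℝ) v)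
  have h := integral_mul_fderiv_eq_neg_fderiv_mul_of_integrable (μ := (volume : Measure (Euc n)))
    (f := fun _ => (1:ℝ)) (g := u) (v := v) (by simp) (by simpa using hi)
    (by simpa using hu.continuous.integrable_of_hasCompactSupport hc) (by simp)
    (fun x _ => hu.differentiable one_ne_zero x)
  simpa using h

lemma aux_polar {n : ℕ} (g : Euc n → ℝ) (a b : Euc n → ℝ) (φ ψ : ℝ → ℝ)
    (ha : Continuous fun x : sphere (0 : Euc n) 1 => a x)
    (hb : Continuous fun x : sphere (0 : Euc n) 1 => b x)
    (hφ : IntegrableOn (fun y : ℝ => y ^ n * φ y) (Ioi 0))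
    (hψ : IntegrableOn (fun y : ℝ => y ^ n * ψ y) (Ioi 0))
    (hg : ∀ r : ℝ, 0 < r → ∀ x ∈ sphere (0 : Euc n) 1, g (r • x) = a x * φ r + b x * ψ r) :
    ∫ y, g y = (∫ x : sphere (0 : Euc n) 1, a x ∂(sphMeasure n)) * (∫ y in Ioi (0:ℝ), y ^ n * φ y)
      + (∫ x : sphere (0 : Euc n) 1, b x ∂(sphMeasure n)) * (∫ y in Ioi (0:ℝ), y ^ n * ψ y) := by
  have hfin : IsFiniteMeasure (sphMeasure n) := by unfold sphMeasure; infer_instance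
  have hd : Module.finrank ℝ (Euc n) - 1 = n := by simp
  have h1 : ∫ y, g y = ∫ x : ({(0)}ᶜ : Set (Euc n)), g x.1 ∂((volume : Measure (Euc n)).comap (Subtype.val : ({(0)}ᶜ : Set (Euc n)) → Euc n)) := by
      rw [integral_subtype_comap (measurableSet_singleton _).compl fun x ↦ g x,
        restrict_compl_singleton]
  have h2 := (volume : Measure (Euc n)).measurePreserving_homeomorphUnitSphereProd.integral_comp
        (Homeomorph.measurableEmbedding _) (fun z => a z.1 * φ z.2 + b z.1 * ψ z.2)
  rw [hd] at h2
  have ia : Integrable (fun x : sphere (0 : Euc n) 1 => a x) (volume : Measure (Euc n)).toSphere :=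
    ha.integrable_of_hasCompactSupport (HasCompactSupport.of_compactSpace _)
  have ib : Integrable (fun x : sphere (0 : Euc n) 1 => b x) (volume : Measure (Euc n)).toSphere :=
    hb.integrable_of_hasCompactSupport (HasCompactSupport.of_compactSpace _)
  rw [integral_add (ia.mul_prod (aux_integrable_vIP n φ hφ))
    (ib.mul_prod (aux_integrable_vIP n ψ hψ)),
    integral_prod_mul (fun x : sphere (0 : Euc n) 1 => a x) (fun r : Ioi (0:ℝ) => φ r),
    integral_prod_mul (fun x : sphere (0 : Euc n) 1 => b x) (fun r : Ioi (0:ℝ) => ψ r),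
    aux_integral_vIP, aux_integral_vIP] at h2
  rw [h1]
  unfold sphMeasure
  rw [← h2]
  refine integral_congr_ae (.of_forall fun y => ?_)
  have hy : 0 < ‖y.1‖ := norm_pos_iff.2 y.2
  have := hg ‖y.1‖ hy (‖y.1‖⁻¹ • y.1) (by simp [norm_smul, hy.ne'])
  rw [smul_inv_smul₀ hy.ne'] at this
  simpa using this

lemma aux_zero_hom {n : ℕ} (F : Euc n → ℝ) (hF : ∀ c : ℝ, 0 < c → ∀ x, F (c • x) = F x)
    (r : ℝ) (hr : 0 < r) (x v : Euc n) (hd : DifferentiableAt ℝ F x) :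
    fderiv ℝ F (r • x) v = r⁻¹ * fderiv ℝ F x v := by
  have e : F = fun y => F (r⁻¹ • y) := by funext y; rw [hF _ (inv_pos.2 hr)]
  have h1 : HasFDerivAt F (fderiv ℝ F x) (r⁻¹ • (r • x)) := by
    rw [inv_smul_smul₀ hr.ne']; exact hd.hasFDerivAt
  have h2 : HasFDerivAt (fun y : Euc n => r⁻¹ • y) (r⁻¹ • ContinuousLinearMap.id ℝ (Euc n)) (r • x) :=
    (hasFDerivAt_id (r • x)).fun_const_smul r⁻¹
  have h3 := h1.comp (r • x) h2
  have h4 : HasFDerivAt F ((fderiv ℝ F x).comp (r⁻¹ • ContinuousLinearMap.id ℝ (Euc n))) (r • x) := by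
    exact h3.congr_of_eventuallyEq (Eventually.of_forall (congrFun e))
  rw [h4.fderiv]
  simp

lemma aux_main {n : ℕ} (hn : 1 ≤ n) (F : Euc n → ℝ)
    (hF : ∀ c : ℝ, 0 < c → ∀ x, F (c • x) = F x)
    (hs : ContDiffOn ℝ 1 F {(0 : Euc n)}ᶜ) (v : Euc n) :
    ∫ x : sphere (0 : Euc n) 1, fderiv ℝ F x v ∂(sphMeasure n)
      = n * ∫ x : sphere (0 : Euc n) 1, F x * ⟪(x : Euc n), v⟫ ∂(sphMeasure n) := by
  let φ : ContDiffBump (2:ℝ) := ⟨1/2, 1, by norm_num, by norm_num⟩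
  have hφc : ContDiff ℝ 1 φ := φ.contDiff
  have hφ0 : ∀ r : ℝ, r ≤ 1 → φ r = 0 := fun r hr => φ.zero_of_le_dist (by
    change (1:ℝ) ≤ _
    rw [Real.dist_eq, abs_of_nonpos (by linarith)]; linarith)
  have hφ3 : ∀ r : ℝ, 3 ≤ r → φ r = 0 := fun r hr => φ.zero_of_le_dist (by
    change (1:ℝ) ≤ _
    rw [Real.dist_eq, abs_of_nonneg (by linarith)]; linarith)
  have hat : ∀ y : Euc n, y ≠ 0 → ContDiffAt ℝ 1 F y := fun y hy =>
    hs.contDiffAt (isOpen_compl_singleton.mem_nhds hy)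
  have hu : ContDiff ℝ 1 (fun y : Euc n => φ ‖y‖ * F y) := by
    rw [contDiff_iff_contDiffAt]
    intro y
    by_cases hy : y = 0
    · subst hy
      have : (fun y : Euc n => φ ‖y‖ * F y) =ᶠ[𝓝 0] fun _ => 0 := by
        filter_upwards [Metric.ball_mem_nhds (0 : Euc n) one_pos] with y hy
        rw [hφ0 _ (by simpa using (mem_ball_zero_iff.1 hy).le), zero_mul]
      exact contDiffAt_const.congr_of_eventuallyEq this
    · exact (hφc.contDiffAt.comp y (contDiffAt_norm ℝ hy)).mul (hat y hy)
  have hc : HasCompactSupport (fun y : Euc n => φ ‖y‖ * F y) := by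
    refine HasCompactSupport.intro (isCompact_closedBall (0 : Euc n) 3) fun y hy => ?_
    rw [hφ3 _ (by simpa using (not_le.1 (fun h => hy (mem_closedBall_zero_iff.2 h))).le), zero_mul]
  have h0 := aux_int_fderiv _ hu hc v
  have hw1 : ContDiff ℝ 1 (fun r : ℝ => r ^ n * φ r) := (contDiff_id.pow n).mul hφc
  have hw2 : HasCompactSupport (fun r : ℝ => r ^ n * φ r) := φ.hasCompactSupport.mul_left
  have hder : ∀ r : ℝ, deriv (fun r : ℝ => r ^ n * φ r) r
      = n * (r ^ (n-1) * φ r) + r ^ n * deriv φ r := by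
    intro r
    have := ((hasDerivAt_pow n r).mul (hφc.differentiable one_ne_zero r).hasDerivAt).deriv
    refine Eq.trans this ?_
    ring
  have hI1 : Integrable (fun r : ℝ => r ^ (n-1) * φ r) :=
    ((continuous_id.pow _).mul hφc.continuous).integrable_of_hasCompactSupport
      φ.hasCompactSupport.mul_left
  have hI2 : Integrable (fun r : ℝ => r ^ n * deriv φ r) :=
    ((continuous_id.pow _).mul (hφc.continuous_deriv le_rfl)).integrable_of_hasCompactSupport
      φ.hasCompactSupport.deriv.mul_left
  have hw := HasCompactSupport.integral_Ioi_deriv_eq hw1 hw2 0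
  simp only [hder] at hw
  rw [integral_add (hI1.const_mul _).integrableOn hI2.integrableOn, integral_const_mul,
    hφ0 0 (by norm_num)] at hw
  have hE : EqOn (fun r : ℝ => r ^ n * (r⁻¹ * φ r)) (fun r : ℝ => r ^ (n-1) * φ r) (Ioi 0) := by
    intro r hr
    have : r ≠ 0 := (mem_Ioi.1 hr).ne'
    obtain ⟨m, rfl⟩ : ∃ m, n = m + 1 := ⟨n - 1, by omega⟩
    simp only [Nat.add_sub_cancel]
    field_simp
    ring
  have hpos : 0 < ∫ r in Ioi (0:ℝ), r ^ (n-1) * φ r := by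
    rw [setIntegral_pos_iff_support_of_nonneg_ae]
    · refine lt_of_lt_of_le ?_ (measure_mono (s := Ioo (1:ℝ) 3) ?_)
      · simp
      · intro r hr
        refine ⟨?_, by simpa using lt_trans one_pos hr.1⟩
        have : 0 < φ r := φ.pos_of_mem_ball (by
          change dist r 2 < 1
          rw [Real.dist_eq, abs_lt]; constructor <;> linarith [hr.1, hr.2])
        have h2 : 0 < r := by linarith [hr.1]
        simp only [Function.mem_support]; positivity
    · filter_upwards [ae_restrict_mem measurableSet_Ioi] with r hr
      have : 0 < r := hr
      have := φ.nonneg' r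
      simp only [Pi.zero_apply]; positivity
    · exact hI1.integrableOn
  have hne : ∀ x : sphere (0 : Euc n) 1, (x : Euc n) ≠ 0 := fun x h => by
    have := norm_eq_of_mem_sphere x
    rw [h] at this; simp at this
  have hcF : Continuous fun x : sphere (0 : Euc n) 1 => F x :=
    hs.continuousOn.comp_continuous continuous_subtype_val hne
  have hcD : Continuous fun x : sphere (0 : Euc n) 1 => fderiv ℝ F x v :=
    ((hs.continuousOn_fderiv_of_isOpen isOpen_compl_singleton le_rfl).comp_continuous
      continuous_subtype_val hne).clm_apply continuous_const
  have hp := aux_polar (fun y => fderiv ℝ (fun y : Euc n => φ ‖y‖ * F y) y v)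
    (fun x => F x * ⟪(x : Euc n), v⟫) (fun x => fderiv ℝ F x v) (deriv φ) (fun r => r⁻¹ * φ r)
    (hcF.mul (continuous_subtype_val.inner continuous_const)) hcD hI2.integrableOn
    ((integrableOn_congr_fun hE measurableSet_Ioi).2 hI1.integrableOn) (by
      intro r hr x hx
      have hx1 : ‖x‖ = 1 := by simpa using hx
      have hx0 : x ≠ 0 := hne ⟨x, hx⟩
      have hrx : r • x ≠ 0 := smul_ne_zero hr.ne' hx0
      have hnr : ‖r • x‖ = r := by rw [norm_smul, hx1, Real.norm_eq_abs, abs_of_pos hr, mul_one]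
      have d1 : HasFDerivAt (fun y : Euc n => φ ‖y‖) _ (r • x) :=
        (hφc.differentiable one_ne_zero ‖r • x‖).hasDerivAt.comp_hasFDerivAt (r • x)
          (aux_norm_deriv _ hrx)
      have d2 := ((hat _ hrx).differentiableAt one_ne_zero).hasFDerivAt
      have d3 := (d1.mul d2).fderiv
      change fderiv ℝ (fun y : Euc n => φ ‖y‖ * F y) (r • x) v = _
      refine (congrArg (fun L => L v) d3).trans ?_
      simp only [_root_.add_apply, _root_.smul_apply, smul_eq_mul, hnr,
        aux_zero_hom F hF r hr x v ((hat x hx0).differentiableAt one_ne_zero), hF r hr,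
        innerSL_apply_apply, inner_smul_left]
      simp
      field_simp
      ring)
  rw [h0, setIntegral_congr_fun measurableSet_Ioi hE] at hp
  have h5 : (∫ r in Ioi (0:ℝ), r ^ n * deriv φ r) = - (n * ∫ r in Ioi (0:ℝ), r ^ (n-1) * φ r) := by
    simp at hw; linarith
  rw [h5] at hp
  have : (∫ r in Ioi (0:ℝ), r ^ (n-1) * φ r) *
    ((∫ x : sphere (0 : Euc n) 1, fderiv ℝ F x v ∂(sphMeasure n))
      - n * ∫ x : sphere (0 : Euc n) 1, F x * ⟪(x : Euc n), v⟫ ∂(sphMeasure n)) = 0 := by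
    linarith
  rcases mul_eq_zero.1 this with h | h
  · exact absurd h hpos.ne'
  · linarith

/-- For a smooth, strictly convex body `K ⊂ ℝ^{n+1}` (`n ≥ 2`) with the
origin in its interior satisfying `h^{p-1}|Dh|^{n+1-q}𝒦 = 1` on `S^n`, with `α = q - n - 1`:
`∫ r^α X dV = ∫ X h^p dμ = ((n+1+p)/n) ∫ r^α ∇̄h dV` as vectors in `ℝ^{n+1}`. -/
theorem integral_X_identities
    (n : ℕ) (hn : 2 ≤ n) (p q α : ℝ) (hα : α = q - (n : ℝ) - 1)
    (H : Euc n → ℝ) (K : Set (Euc n))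
    (hK : K = {y : Euc n | ∀ x : Euc n, ⟪x, y⟫ ≤ H x})
    (hhomog : ∀ c : ℝ, 0 < c → ∀ x : Euc n, H (c • x) = c * H x)
    (hconv : ConvexOn ℝ Set.univ H)
    (hsmooth : ContDiffOn ℝ (⊤ : ℕ∞) H {(0 : Euc n)}ᶜ)
    (hpos : ∀ x ∈ sphere (0 : Euc n) 1, 0 < H x)
    (hposdef : ∀ x ∈ sphere (0 : Euc n) 1, (bmat n H x).PosDef)
    (heq : ∀ x ∈ sphere (0 : Euc n) 1,
      H x ^ (p - 1) * ‖gradient H x‖ ^ ((n : ℝ) + 1 - q) * gaussCurv n H x = 1) :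
    (∫ x : sphere (0 : Euc n) 1,
        volDens n H x • (‖gradient H x‖ ^ α • gradient H x) ∂(sphMeasure n))
      = (∫ x : sphere (0 : Euc n) 1, H x ^ p • gradient H x ∂(sphMeasure n))
    ∧ (∫ x : sphere (0 : Euc n) 1, H x ^ p • gradient H x ∂(sphMeasure n))
      = (((n : ℝ) + 1 + p) / n) •
          ∫ x : sphere (0 : Euc n) 1,
            volDens n H x • (‖gradient H x‖ ^ α • sphGrad n H x) ∂(sphMeasure n) := by
  have hne : ∀ x : sphere (0 : Euc n) 1, (x : Euc n) ≠ 0 := fun x h => by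
    have := norm_eq_of_mem_sphere x
    rw [h] at this; simp at this
  have hfin : IsFiniteMeasure (sphMeasure n) := by unfold sphMeasure; infer_instance
  have hH1 : ContDiffOn ℝ 1 H {(0 : Euc n)}ᶜ := hsmooth.of_le (by exact_mod_cast le_top)
  let G : Euc n → ℝ := fun y => H (‖y‖⁻¹ • y)
  have hmap : ∀ y : Euc n, y ≠ 0 → ‖y‖⁻¹ • y ≠ 0 := fun y hy =>
    smul_ne_zero (inv_ne_zero (norm_ne_zero_iff.2 hy)) hy
  have hGpos : ∀ y : Euc n, y ≠ 0 → 0 < G y := fun y hy => hpos _ (by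
    simp [norm_smul, hy])
  have hGc : ContDiffOn ℝ 1 G {(0 : Euc n)}ᶜ := by
    refine hH1.comp (t := {(0 : Euc n)}ᶜ) (f := fun y => ‖y‖⁻¹ • y) ?_ (fun y hy => hmap y hy)
    intro y hy
    exact (((contDiffAt_norm ℝ hy).inv (norm_ne_zero_iff.2 hy)).smul contDiffAt_id).contDiffWithinAt
  have hGh : ∀ c : ℝ, 0 < c → ∀ x, G (c • x) = G x := by
    intro c hc x
    change H _ = H _
    congr 1
    rw [norm_smul, Real.norm_eq_abs, abs_of_pos hc, smul_smul]
    congr 1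
    field_simp
  have hGd : ∀ y : Euc n, y ≠ 0 → DifferentiableAt ℝ G y := fun y hy =>
    (hGc.contDiffAt (isOpen_compl_singleton.mem_nhds hy)).differentiableAt one_ne_zero
  have hGx : ∀ x : sphere (0 : Euc n) 1, G x = H x := fun x => by simp [G]
  have hgrad : ∀ (f : Euc n → ℝ) (x v : Euc n), ⟪v, gradient f x⟫ = fderiv ℝ f x v := by
    intro f x v
    rw [real_inner_comm, gradient, InnerProductSpace.toDual_symm_apply]
  have hHd : ∀ (x : sphere (0 : Euc n) 1) (v : Euc n),
      ⟪v, gradient H x⟫ = ⟪v, sphGrad n H x⟫ + H x * ⟪(x : Euc n), v⟫ := by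
    intro x v
    have e : H =ᶠ[𝓝 (x : Euc n)] fun y => ‖y‖ * G y := by
      filter_upwards [isOpen_compl_singleton.mem_nhds (hne x)] with y hy
      have : 0 < ‖y‖ := norm_pos_iff.2 hy
      rw [← hhomog _ this, smul_inv_smul₀ this.ne']
    have d := ((aux_norm_deriv (x : Euc n) (hne x)).mul (hGd x (hne x)).hasFDerivAt)
    have d' := (d.congr_of_eventuallyEq e).fderiv
    rw [hgrad, sphGrad, hgrad, d']
    change _ = fderiv ℝ G x v + _
    simp [hGx]
  have hrad : ∀ x : sphere (0 : Euc n) 1, fderiv ℝ G x (x : Euc n) = 0 := by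
    intro x
    have h1 : HasDerivAt (fun t : ℝ => G ((x : Euc n) + t • (x : Euc n))) (fderiv ℝ G x x) 0 :=
      (hGd x (hne x)).hasFDerivAt.hasLineDerivAt (x : Euc n)
    have h2 : (fun t : ℝ => G ((x : Euc n) + t • (x : Euc n))) =ᶠ[𝓝 0] fun _ => G x := by
      filter_upwards [lt_mem_nhds (show (-1 : ℝ) < 0 by norm_num)] with t ht
      have : (x : Euc n) + t • (x : Euc n) = (1 + t) • (x : Euc n) := by rw [add_smul, one_smul]
      rw [this, hGh _ (by linarith)]
    exact h1.unique ((hasDerivAt_const (0 : ℝ) (G x)).congr_of_eventuallyEq h2)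
  have hgpos : ∀ x : sphere (0 : Euc n) 1, 0 < ‖gradient H x‖ := by
    intro x
    rw [norm_pos_iff]
    intro h0
    have h1 := hHd x x
    rw [h0, sphGrad, hgrad] at h1
    change _ = fderiv ℝ G x x + _ at h1
    rw [hrad x] at h1
    simp at h1
    exact (hpos x x.2).ne h1
  have hkey : ∀ x : sphere (0 : Euc n) 1, volDens n H x * ‖gradient H x‖ ^ α = H x ^ p := by
    intro x
    have h1 := heq x x.2
    have hp' := hpos x x.2
    have hg' := hgpos x
    unfold gaussCurv at h1
    have hs : sigman n H x ≠ 0 := by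
      intro h; rw [h] at h1; simp at h1
    have h2 : sigman n H x = H x ^ (p - 1) * ‖gradient H x‖ ^ ((n : ℝ) + 1 - q) := by
      field_simp at h1
      exact h1.symm
    have h3 : ‖gradient H x‖ ^ ((n : ℝ) + 1 - q) * ‖gradient H x‖ ^ α = 1 := by
      rw [← Real.rpow_add hg', hα, show (n : ℝ) + 1 - q + (q - n - 1) = 0 by ring, Real.rpow_zero]
    have h4 : H x * H x ^ (p - 1) = H x ^ p := by
      rw [Real.rpow_sub_one hp'.ne']; field_simp
    unfold volDens
    rw [h2, ← h4]
    calc _ = H x * H x ^ (p - 1) *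
          (‖gradient H x‖ ^ ((n : ℝ) + 1 - q) * ‖gradient H x‖ ^ α) := by ring
      _ = _ := by rw [h3, mul_one]
  simp only [smul_smul, hkey, true_and]
  have hcf : ∀ f : Euc n → ℝ, ContDiffOn ℝ 1 f {(0 : Euc n)}ᶜ →
      Continuous fun x : sphere (0 : Euc n) 1 => gradient f x := fun f hf =>
    (InnerProductSpace.toDual ℝ (Euc n)).symm.continuous.comp
      ((hf.continuousOn_fderiv_of_isOpen isOpen_compl_singleton le_rfl).comp_continuous
        continuous_subtype_val hne)
  have hcH : Continuous fun x : sphere (0 : Euc n) 1 => H x :=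
    hH1.continuousOn.comp_continuous continuous_subtype_val hne
  have hcP : ∀ s : ℝ, Continuous fun x : sphere (0 : Euc n) 1 => H x ^ s := fun s =>
    hcH.rpow_const fun x => Or.inl (hpos x x.2).ne'
  have iA : Integrable (fun x : sphere (0 : Euc n) 1 => H x ^ p • gradient H x) (sphMeasure n) :=
    ((hcP p).smul (hcf H hH1)).integrable_of_hasCompactSupport
      (HasCompactSupport.of_compactSpace _)
  have cS : Continuous (fun x : sphere (0 : Euc n) 1 => H x ^ p • sphGrad n H x) :=
    (hcP p).smul (hcf G hGc)
  have iS : Integrable (fun x : sphere (0 : Euc n) 1 => H x ^ p • sphGrad n H x) (sphMeasure n) :=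
    cS.integrable_of_hasCompactSupport (HasCompactSupport.of_compactSpace _)
  refine ext_inner_left ℝ fun v => ?_
  rw [inner_smul_right, ← integral_inner iA, ← integral_inner iS]
  have hm := aux_main (by omega : 1 ≤ n) (fun y => G y ^ (p + 1))
    (fun c hc x => by simp only [hGh c hc])
    (fun y hy => (hGc y hy).rpow_const_of_ne (hGpos y hy).ne') v
  have hd : ∀ x : sphere (0 : Euc n) 1, fderiv ℝ (fun y => G y ^ (p + 1)) x v
      = (p + 1) * ⟪v, H x ^ p • sphGrad n H x⟫ := by
    intro x
    have := ((hGd x (hne x)).hasFDerivAt.rpow_const (p := p + 1) (Or.inl (hGpos x (hne x)).ne')).fderiv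
    rw [this, inner_smul_right, sphGrad, hgrad]
    change _ = (p + 1) * (_ * fderiv ℝ G x v)
    simp [hGx, mul_assoc]
  simp only [hd, hGx] at hm
  rw [integral_const_mul] at hm
  have hA : ∀ x : sphere (0 : Euc n) 1, ⟪v, H x ^ p • gradient H x⟫
      = ⟪v, H x ^ p • sphGrad n H x⟫ + H x ^ (p + 1) * ⟪(x : Euc n), v⟫ := by
    intro x
    rw [inner_smul_right, inner_smul_right, hHd, Real.rpow_add_one (hpos x x.2).ne']
    ring
  simp only [hA]
  rw [integral_add (iS.const_inner v)]
  · have : (n : ℝ) ≠ 0 := by positivity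
    field_simp
    linarith
  · exact ((hcP (p + 1)).mul (continuous_subtype_val.inner
      continuous_const)).integrable_of_hasCompactSupport (HasCompactSupport.of_compactSpace _)
end
end
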